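/- arXiv:2310.17635 — 3 statements merged into one kernel-verified Lean document; each statement's English description precedes it below -/
import Mathlib

section
/- Fix δ > 0 and C > 0. There exists c = c(δ, C) > 0 such that the following holds. Let d ∈ [1+δ, δ^{−1}], let n be a positive integer, and let (𝐝, 𝐝′) be a degree sequence of length m which is (d, c, C)-regular (with respect to n) and for which the set of m×m {0,1}-matrices with column sums 𝐝 and row sums 𝐝′ is nonempty. Let M be a uniformly random m×m {0,1}-matrix with column sums 𝐝 and row sums 𝐝′. For an integer k with 0 ≤ k ≤ cm, let 𝒴_k be the collection of subsets S ⊆ [m] of size k such that |Σ_{i∈S} d_i − k| ≤ k/√(log(m/k)) and |U(S)| ≤ α(k)·k. Then E|𝒴_k| ≤ c^{−1}·exp(−ck). -/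
/-- `α(x) = (log (n/x))⁻²`. -/
noncomputable def alphaFn (n : ℕ) (x : ℝ) : ℝ :=
  ((Real.log ((n : ℝ) / x)) ^ 2)⁻¹

/-- Column sums of a `{0,1}`-matrix given as a `Bool`-valued matrix. -/
def colSum {m : ℕ} (M : Fin m → Fin m → Bool) (j : Fin m) : ℕ :=
  ∑ i, if M i j then 1 else 0

/-- Row sums of a `{0,1}`-matrix given as a `Bool`-valued matrix. -/
def rowSum {m : ℕ} (M : Fin m → Fin m → Bool) (i : Fin m) : ℕ :=
  ∑ j, if M i j then 1 else 0

/-- The set of unique neighbours `U(S)` of a set `S` of columns of a square `{0,1}`-matrix. -/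
def uniqueNbrSetB {m : ℕ} (M : Fin m → Fin m → Bool) (S : Finset (Fin m)) : Set (Fin m) :=
  {i | (i ∈ S ∧ ∀ j ∈ S, M i j = false) ∨
       (i ∉ S ∧ {j : Fin m | j ∈ S ∧ M i j = true}.ncard = 1)}

/-- A pair of degree sequences `(𝐝, 𝐝′)` of length `m` is `(d, μ, C)`-regular with respect
to `n`. -/
def DegRegular (n m : ℕ) (ds ds' : Fin m → ℕ) (d μ C : ℝ) : Prop :=
  (m : ℝ) / n ∈ Set.Icc (1 - μ) (1 + μ) ∧
  (∀ S : Finset (Fin m), S.Nonempty →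
    (∑ i ∈ S, ((ds i : ℝ) + (ds' i : ℝ))) ≤
      C * (d + Real.log ((m : ℝ) / S.card)) * S.card) ∧
  (∑ i, (ds i : ℝ)) ∈ Set.Icc ((1 - μ) * (d * m)) ((1 + μ) * (d * m)) ∧
  (∑ i, (ds' i : ℝ)) ∈ Set.Icc ((1 - μ) * (d * m)) ((1 + μ) * (d * m)) ∧
  (∑ i, d ^ (-(ds i : ℝ)) * (ds' i : ℝ)) ∈
    Set.Icc ((1 - μ) * (Real.exp 1 * d * Real.exp (-d) * m))
      ((1 + μ) * (Real.exp 1 * d * Real.exp (-d) * m))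

/-!
Fix a set `S` of `k` indices. If `U(S) ∩ S` is small, then almost all rows of `S` have a one in some
column of `S`. For a set `R ⊆ S` of rows, switching pairs of ones bounds the expected number of ways
to pick, for each `i ∈ R`, a one of row `i` in a column of `S`: exposing the rows one by one, each
costs at most `ds' i / F` times the remaining degree of `S`, where `F` is nearly `d * m`. As the
columns of `S` have total degree about `k`, the remaining degrees multiply to about `k!`.

It remains to sum `∏ i ∈ R, ds' i` over `S` and over the almost full `R ⊆ S`. Replacing `ds' i` by
`d * d ^ (-ds i) * ds' i` costs little, again as the total degree of `S` is about `k`, and turns the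
sum into an elementary symmetric polynomial of degree about `k` in variables of total about
`e * d ^ 2 * e ^ (-d) * m`. So the expectation is about `(e * d * e ^ (-d)) ^ k`, and
`e * d * e ^ (-d) < 1` for `d > 1`.
-/

section BooleanMatrices

open Finset

variable {ρ κ : Type*}

/-- The columns in which row `i` of a `{0,1}`-matrix has a one. Matrices are `Bool`-valued
functions, as in `rowSum`. -/
def rowSupport [Fintype κ] (M : ρ → κ → Bool) (i : ρ) : Finset κ :=
  {j | M i j}

/-- The rows in which column `j` of a `{0,1}`-matrix has a one, encoded as a row of the transpose
so that statements about rows transfer to columns. -/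
def colSupport [Fintype ρ] (M : ρ → κ → Bool) (j : κ) : Finset ρ :=
  rowSupport (Function.swap M) j

@[simp]
lemma mem_rowSupport [Fintype κ] {M : ρ → κ → Bool} {i : ρ} {j : κ} :
    j ∈ rowSupport M i ↔ M i j := by
  simp [rowSupport]

@[simp]
lemma mem_colSupport [Fintype ρ] {M : ρ → κ → Bool} {i : ρ} {j : κ} :
    i ∈ colSupport M j ↔ M i j := by
  simp [colSupport, Function.swap]

lemma rowSum_eq_card_rowSupport {m : ℕ} (M : Fin m → Fin m → Bool) (i : Fin m) :
    rowSum M i = #(rowSupport M i) := by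
  rw [rowSupport, card_filter, rowSum]

lemma colSum_eq_card_colSupport {m : ℕ} (M : Fin m → Fin m → Bool) (j : Fin m) :
    colSum M j = #(colSupport M j) := by
  rw [colSupport, rowSupport, card_filter, colSum]

lemma sum_card_colSupport [Fintype ρ] [Fintype κ] (M : ρ → κ → Bool) :
    ∑ j, #(colSupport M j) = #{p : ρ × κ | M p.1 p.2} := by
  simp only [card_filter, Fintype.sum_prod_type_right, colSupport, rowSupport, Function.swap]

/-- Flip the four entries of a `{0,1}`-matrix in rows `i, a` and columns `j, b`. This is the
switching operation of the theory of random graphs with given degrees. -/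
def switchEntries [DecidableEq ρ] [DecidableEq κ] (i : ρ) (j : κ) (a : ρ) (b : κ)
    (M : ρ → κ → Bool) : ρ → κ → Bool :=
  fun x y => if (x = i ∨ x = a) ∧ (y = j ∨ y = b) then !M x y else M x y

section Switching

variable [DecidableEq ρ] [DecidableEq κ] {i a : ρ} {j b : κ} {M : ρ → κ → Bool}

lemma switchEntries_involutive (i : ρ) (j : κ) (a : ρ) (b : κ) :
    Function.Involutive (switchEntries i j a b) := by
  intro M
  ext x y
  unfold switchEntries
  split_ifs <;> simp

lemma swap_switchEntries (i : ρ) (j : κ) (a : ρ) (b : κ) (M : ρ → κ → Bool) :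
    Function.swap (switchEntries i j a b M) = switchEntries j i b a (Function.swap M) := by
  ext y x
  simp only [Function.swap, switchEntries, and_comm]

lemma card_rowSupport_switchEntries [Fintype κ] (hi : M i b = !M i j) (ha : M a b = !M a j)
    (x : ρ) : #(rowSupport (switchEntries i j a b M) x) = #(rowSupport M x) := by
  by_cases hx : x = i ∨ x = a
  · refine card_equiv (Equiv.swap j b) fun y => ?_
    have hxb : M x b = !M x j := by rcases hx with rfl | rfl <;> assumption
    rcases eq_or_ne y j with rfl | hj
    · simp [switchEntries, hx, hxb]
    rcases eq_or_ne y b with rfl | hb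
    · simp [switchEntries, hx, hxb]
    · simp [switchEntries, hj, hb, Equiv.swap_apply_of_ne_of_ne]
  · simp [rowSupport, switchEntries, hx]

lemma card_colSupport_switchEntries [Fintype ρ] (hj : M a j = !M i j) (hb : M a b = !M i b)
    (y : κ) : #(colSupport (switchEntries i j a b M) y) = #(colSupport M y) := by
  rw [colSupport, swap_switchEntries]
  exact card_rowSupport_switchEntries hj hb y

end Switching

lemma card_filter_le_sum_prod (G : Finset (ρ → κ → Bool)) (A : Finset ρ) (S : Finset κ) (r : ℕ) :
    #{M ∈ G | r ≤ #{i ∈ A | ∃ j ∈ S, M i j}} ≤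
      ∑ R ∈ A.powersetCard r, ∑ M ∈ G, ∏ i ∈ R, #{j ∈ S | M i j} := by
  rw [card_filter, sum_comm]
  refine sum_le_sum fun M _ => ?_
  split_ifs with h
  · obtain ⟨R, hR, hRr⟩ := exists_subset_card_eq h
    have hpos : 0 < ∏ i ∈ R, #{j ∈ S | M i j} := prod_pos fun i hi => by
      simpa [card_pos, Finset.Nonempty] using (mem_filter.1 (hR hi)).2
    exact hpos.trans_le <| single_le_sum (f := fun R => ∏ i ∈ R, #{j ∈ S | M i j})
      (fun _ _ => Nat.zero_le _) (mem_powersetCard.2 ⟨hR.trans (filter_subset _ _), hRr⟩)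
  · exact Nat.zero_le _

end BooleanMatrices

section PrescribedSums

open Finset

variable {ρ κ : Type*} [Fintype ρ] [Fintype κ] [DecidableEq ρ] [DecidableEq κ]

/-- The `{0,1}`-matrices with column sums `ds` and row sums `ds'`. -/
def matricesWithSums (ds : κ → ℕ) (ds' : ρ → ℕ) : Finset (ρ → κ → Bool) :=
  {M | (∀ j, #(colSupport M j) = ds j) ∧ ∀ i, #(rowSupport M i) = ds' i}

/-- The matrices with column sums `ds` and row sums `ds'` having ones at all positions in `E`:
conditioning on partial information in a switching argument. -/
def matricesContaining (ds : κ → ℕ) (ds' : ρ → ℕ) (E : Finset (ρ × κ)) :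
    Finset (ρ → κ → Bool) :=
  {M ∈ matricesWithSums ds ds' | ∀ p ∈ E, M p.1 p.2}

variable {ds : κ → ℕ} {ds' : ρ → ℕ} {M : ρ → κ → Bool} {E : Finset (ρ × κ)}

lemma mem_matricesWithSums : M ∈ matricesWithSums ds ds' ↔
    (∀ j, #(colSupport M j) = ds j) ∧ ∀ i, #(rowSupport M i) = ds' i := by
  simp [matricesWithSums]

lemma mem_matricesContaining : M ∈ matricesContaining ds ds' E ↔
    M ∈ matricesWithSums ds ds' ∧ ∀ p ∈ E, M p.1 p.2 := by
  simp [matricesContaining]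

lemma matricesContaining_empty : matricesContaining ds ds' ∅ = matricesWithSums ds ds' := by
  simp [matricesContaining]

lemma matricesContaining_insert (p : ρ × κ) :
    matricesContaining ds ds' (insert p E) = {M ∈ matricesContaining ds ds' E | M p.1 p.2} := by
  ext M
  simp only [mem_matricesContaining, mem_filter, forall_mem_insert]
  tauto

lemma card_colSupport_filter_mem (hM : M ∈ matricesContaining ds ds' E) (j : κ) :
    #{a ∈ colSupport M j | (a, j) ∈ E} = #{p ∈ E | p.2 = j} := by
  refine card_nbij' (fun a => (a, j)) Prod.fst ?_ ?_ ?_ ?_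
  · intro a; simp +contextual
  · rintro ⟨a, b⟩ hp
    obtain ⟨hab, rfl⟩ : (a, b) ∈ E ∧ b = j := by simpa using hp
    simpa [hab] using (mem_matricesContaining.1 hM).2 _ hab
  · intro a _; rfl
  · rintro ⟨a, b⟩ hp
    simp_all

lemma card_colSupport_filter_notMem (hM : M ∈ matricesContaining ds ds' E) (j : κ) :
    #{a ∈ colSupport M j | (a, j) ∉ E} = ds j - #{p ∈ E | p.2 = j} := by
  have hcol := (mem_matricesWithSums.1 (mem_matricesContaining.1 hM).1).1 j
  have hsplit := card_filter_add_card_filter_not (s := colSupport M j) (fun a => (a, j) ∈ E)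
  rw [card_colSupport_filter_mem hM] at hsplit
  omega

lemma card_filter_snd_le (hM : M ∈ matricesContaining ds ds' E) (j : κ) :
    #{p ∈ E | p.2 = j} ≤ ds j := by
  rw [← card_colSupport_filter_mem hM, ← (mem_matricesWithSums.1 (mem_matricesContaining.1 hM).1).1]
  exact card_filter_le _ _

/-- The positions `(a, b)` outside `E` such that switching rows `i, a` and columns `j, b` of a
matrix with a one at `(i, j)` moves the ones at `(i, j)` and `(a, b)` to `(i, b)` and `(a, j)`. -/
def switchPartners (M : ρ → κ → Bool) (E : Finset (ρ × κ)) (i : ρ) (j : κ) : Finset (ρ × κ) :=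
  {p | M p.1 p.2 ∧ p ∉ E ∧ M i p.2 = false ∧ M p.1 j = false}

lemma card_biUnion_colSupport_product_le {D D' : ℕ} (hD : ∀ j, ds j ≤ D) (hD' : ∀ i, ds' i ≤ D')
    (hM : M ∈ matricesWithSums ds ds') (i : ρ) :
    #((rowSupport M i).biUnion fun b => colSupport M b ×ˢ {b}) ≤ D * D' := by
  obtain ⟨hcol, hrow⟩ := mem_matricesWithSums.1 hM
  rw [mul_comm]
  refine (card_biUnion_le_card_mul _ _ D fun b _ => ?_).trans
    (Nat.mul_le_mul_right _ ((hrow i).trans_le (hD' i)))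
  simpa [hcol] using hD b

lemma card_biUnion_product_rowSupport_le {D D' : ℕ} (hD : ∀ j, ds j ≤ D) (hD' : ∀ i, ds' i ≤ D')
    (hM : M ∈ matricesWithSums ds ds') (j : κ) :
    #((colSupport M j).biUnion fun a => {a} ×ˢ rowSupport M a) ≤ D * D' := by
  obtain ⟨hcol, hrow⟩ := mem_matricesWithSums.1 hM
  refine (card_biUnion_le_card_mul _ _ D' fun a _ => ?_).trans
    (Nat.mul_le_mul_right _ ((hcol j).trans_le (hD j)))
  simpa [hrow] using hD' a

lemma le_card_switchPartners {D D' F : ℕ} (hD : ∀ j, ds j ≤ D) (hD' : ∀ i, ds' i ≤ D')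
    (hF : F + #E + 2 * (D * D') ≤ ∑ j, ds j) (hM : M ∈ matricesWithSums ds ds') (i : ρ) (j : κ) :
    F ≤ #(switchPartners M E i j) := by
  have hones : #{p : ρ × κ | M p.1 p.2} = ∑ j, ds j := by
    simp only [← sum_card_colSupport, (mem_matricesWithSums.1 hM).1]
  have hcover : ({p : ρ × κ | M p.1 p.2} : Finset _) ⊆ switchPartners M E i j ∪ E ∪
      ((rowSupport M i).biUnion fun b => colSupport M b ×ˢ {b}) ∪
      ((colSupport M j).biUnion fun a => {a} ×ˢ rowSupport M a) := by
    rintro ⟨a, b⟩ hab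
    simp only [switchPartners, mem_union, mem_filter, mem_univ, true_and, mem_biUnion,
      mem_product, mem_rowSupport, mem_colSupport, mem_singleton] at hab ⊢
    grind
  have hcard := card_le_card hcover
  have hrow := card_biUnion_colSupport_product_le hD hD' hM i
  have hcol := card_biUnion_product_rowSupport_le hD hD' hM j
  grind [card_union_le]

lemma switchEntries_mem_matricesContaining {i a : ρ} {j b : κ} (hE : ∀ p ∈ E, p.1 ≠ i)
    (hM : M ∈ matricesContaining ds ds' (insert (i, j) E))
    (hab : (a, b) ∈ switchPartners M E i j) :
    switchEntries i j a b M ∈ matricesContaining ds ds' E := by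
  simp only [matricesContaining_insert, mem_filter, mem_matricesContaining, mem_matricesWithSums,
    switchPartners, mem_univ, true_and] at hM hab ⊢
  obtain ⟨⟨⟨hcol, hrow⟩, hME⟩, hij⟩ := hM
  obtain ⟨hMab, habE, hib, haj⟩ := hab
  refine ⟨⟨fun y => ?_, fun x => ?_⟩, ?_⟩
  · rw [card_colSupport_switchEntries (by simp [hij, haj]) (by simp [hMab, hib]), hcol]
  · rw [card_rowSupport_switchEntries (by simp [hij, hib]) (by simp [hMab, haj]), hrow]
  · rintro ⟨x, y⟩ hxy
    have hMxy := hME _ hxy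
    have hxi := hE _ hxy
    unfold switchEntries
    grind

/-- Each matrix with a one at `(i, j)` has `F` switchings, and a matrix arises by switching in at
most as many ways as there are ones in row `i` and ones outside `E` in column `j`. -/
lemma card_matricesContaining_insert_mul_le {D D' F : ℕ} {i : ρ} (j : κ)
    (hD : ∀ j, ds j ≤ D) (hD' : ∀ i, ds' i ≤ D') (hE : ∀ p ∈ E, p.1 ≠ i)
    (hF : F + #E + 2 * (D * D') ≤ ∑ j, ds j) :
    #(matricesContaining ds ds' (insert (i, j) E)) * F ≤
      #(matricesContaining ds ds' E) * ((ds j - #{p ∈ E | p.2 = j}) * ds' i) := by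
  let switchings : Finset (Σ _ : ρ → κ → Bool, ρ × κ) :=
    (matricesContaining ds ds' (insert (i, j) E)).sigma fun M => switchPartners M E i j
  let reversals : Finset (Σ _ : ρ → κ → Bool, ρ × κ) :=
    (matricesContaining ds ds' E).sigma fun M =>
      {a ∈ colSupport M j | (a, j) ∉ E} ×ˢ rowSupport M i
  have hswitchings : #(matricesContaining ds ds' (insert (i, j) E)) * F ≤ #switchings := by
    rw [card_sigma, ← smul_eq_mul]
    refine card_nsmul_le_sum _ _ _ fun M hM => le_card_switchPartners hD hD' hF ?_ i j
    exact (mem_matricesContaining.1 hM).1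
  have hreversals : #reversals =
      #(matricesContaining ds ds' E) * ((ds j - #{p ∈ E | p.2 = j}) * ds' i) := by
    rw [card_sigma, ← smul_eq_mul, ← sum_const]
    refine sum_congr rfl fun M hM => ?_
    rw [card_product, card_colSupport_filter_notMem hM,
      (mem_matricesWithSums.1 (mem_matricesContaining.1 hM).1).2]
  refine hswitchings.trans (le_of_le_of_eq ?_ hreversals)
  refine card_le_card_of_injOn (fun q => ⟨switchEntries i j q.2.1 q.2.2 q.1, q.2⟩) ?_ ?_
  · rintro ⟨M, a, b⟩ hq
    obtain ⟨hM, hab⟩ := mem_sigma.1 hq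
    have hmem := switchEntries_mem_matricesContaining hE hM hab
    simp only [switchPartners, mem_filter, mem_univ, true_and] at hab
    simp only [matricesContaining_insert, mem_filter, mem_matricesContaining] at hM
    simp only [reversals, coe_sigma, Set.mem_sigma_iff, mem_coe, mem_product, mem_filter,
      mem_rowSupport, mem_colSupport]
    have hMaj : (a, j) ∉ E := fun h => by simp [hM.1.2 _ h] at hab
    simp [hmem, hMaj, switchEntries, hab]
  · rintro ⟨M, p⟩ _ ⟨M', p'⟩ _ h
    obtain ⟨hM, rfl⟩ : switchEntries i j p.1 p.2 M = switchEntries i j p'.1 p'.2 M' ∧ p = p' := by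
      simpa using h
    rw [(switchEntries_involutive i j p.1 p.2).injective hM]

lemma sum_matricesContaining_card_mul (S : Finset κ) (i : ρ) (f : (ρ → κ → Bool) → ℕ) :
    ∑ M ∈ matricesContaining ds ds' E, #{j ∈ S | M i j} * f M =
      ∑ j ∈ S, ∑ M ∈ matricesContaining ds ds' (insert (i, j) E), f M := by
  simp only [matricesContaining_insert, sum_filter, card_filter, sum_mul, ite_mul, one_mul,
    zero_mul]
  exact sum_comm

lemma sum_tsub_card_filter_snd (hM : M ∈ matricesContaining ds ds' E) {S : Finset κ}
    (hES : ∀ p ∈ E, p.2 ∈ S) :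
    ∑ j ∈ S, (ds j - #{p ∈ E | p.2 = j}) = ∑ j ∈ S, ds j - #E := by
  rw [sum_tsub_distrib _ fun j _ => card_filter_snd_le hM j, ← card_eq_sum_card_fiberwise hES]

lemma descFactorial_succ_eq_mul_pred (n r : ℕ) :
    n.descFactorial (r + 1) = n * (n - 1).descFactorial r := by
  cases n with
  | zero => simp
  | succ n => exact Nat.succ_descFactorial_succ n r

lemma sum_prod_card_mul_pow_le {D D' F : ℕ} (hD : ∀ j, ds j ≤ D) (hD' : ∀ i, ds' i ≤ D')
    (S : Finset κ) (R : Finset ρ) (hER : ∀ p ∈ E, p.1 ∉ R) (hES : ∀ p ∈ E, p.2 ∈ S)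
    (hF : F + (#E + #R) + 2 * (D * D') ≤ ∑ j, ds j) :
    (∑ M ∈ matricesContaining ds ds' E, ∏ i ∈ R, #{j ∈ S | M i j}) * F ^ #R ≤
      #(matricesContaining ds ds' E) *
        ((∏ i ∈ R, ds' i) * (∑ j ∈ S, ds j - #E).descFactorial #R) := by
  induction R using Finset.induction_on generalizing E with
  | empty => simp
  | insert i R hiR ih =>
    rw [card_insert_of_notMem hiR] at hF ⊢
    simp only [prod_insert hiR, sum_matricesContaining_card_mul]
    set K := (∏ i ∈ R, ds' i) * (∑ j ∈ S, ds j - (#E + 1)).descFactorial #R with hK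
    have hEi : ∀ p ∈ E, p.1 ≠ i := fun p hp h => hER p hp (by simp [h])
    have hstep : ∀ j ∈ S,
        (∑ M ∈ matricesContaining ds ds' (insert (i, j) E), ∏ i' ∈ R, #{j ∈ S | M i' j}) *
            F ^ (#R + 1) ≤
          #(matricesContaining ds ds' E) * ((ds j - #{p ∈ E | p.2 = j}) * ds' i) * K := by
      intro j hj
      have hcard : #(insert (i, j) E) = #E + 1 :=
        card_insert_of_notMem fun h => hEi _ h rfl
      have hrest := ih (E := insert (i, j) E) (by grind) (by grind) (by omega)
      rw [hcard] at hrest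
      calc _ = (∑ M ∈ matricesContaining ds ds' (insert (i, j) E),
              ∏ i' ∈ R, #{j ∈ S | M i' j}) * F ^ #R * F := by ring
        _ ≤ #(matricesContaining ds ds' (insert (i, j) E)) * K * F := by gcongr
        _ = #(matricesContaining ds ds' (insert (i, j) E)) * F * K := by ring
        _ ≤ _ := Nat.mul_le_mul_right K <|
          card_matricesContaining_insert_mul_le (F := F) j hD hD' hEi (by omega)
    rw [sum_mul]
    refine (sum_le_sum hstep).trans ?_
    rw [← sum_mul, ← mul_sum, ← sum_mul]
    obtain hempty | ⟨M, hM⟩ := (matricesContaining ds ds' E).eq_empty_or_nonempty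
    · simp [hempty]
    · rw [sum_tsub_card_filter_snd hM hES, descFactorial_succ_eq_mul_pred, Nat.sub_sub, hK]
      exact le_of_eq (by ring)

lemma card_filter_mul_pow_le {D D' F r : ℕ} (hD : ∀ j, ds j ≤ D) (hD' : ∀ i, ds' i ≤ D')
    (A : Finset ρ) (S : Finset κ) (hF : F + r + 2 * (D * D') ≤ ∑ j, ds j) :
    #{M ∈ matricesWithSums ds ds' | r ≤ #{i ∈ A | ∃ j ∈ S, M i j}} * F ^ r ≤
      #(matricesWithSums ds ds') * (r.factorial * (∑ j ∈ S, ds j).choose r *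
        ∑ R ∈ A.powersetCard r, ∏ i ∈ R, ds' i) := by
  refine (Nat.mul_le_mul_right _ (card_filter_le_sum_prod _ A S r)).trans ?_
  rw [sum_mul, mul_sum, mul_sum]
  refine sum_le_sum fun R hR => ?_
  have hRr := (mem_powersetCard.1 hR).2
  have h := sum_prod_card_mul_pow_le (E := ∅) (F := F) hD hD' S R (by simp) (by simp)
    (by simp; omega)
  rw [matricesContaining_empty, card_empty, Nat.sub_zero, hRr,
    Nat.descFactorial_eq_factorial_mul_choose] at h
  exact h.trans_eq (by ring)

end PrescribedSums

section WeightedSubsets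

open Finset

lemma esymm_mul_factorial_le_sum_pow {R : Type*} [CommSemiring R] [LinearOrder R]
    [IsStrictOrderedRing R] [ExistsAddOfLE R] (s : Multiset R) (hs : ∀ a ∈ s, 0 ≤ a) (r : ℕ) :
    s.esymm r * r.factorial ≤ s.sum ^ r := by
  induction s using Multiset.induction_on generalizing r with
  | empty => cases r <;> simp [Multiset.esymm, Multiset.powersetCard_zero_right]
  | cons a s ih =>
    obtain ⟨ha, hs⟩ := Multiset.forall_mem_cons.1 hs
    cases r with
    | zero => simp [Multiset.esymm]
    | succ r =>
      have hsum : 0 ≤ s.sum := Multiset.sum_nonneg hs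
      have hcons : (a ::ₘ s).esymm (r + 1) = s.esymm (r + 1) + a * s.esymm r := by
        simp [Multiset.esymm, Multiset.powersetCard_cons, Multiset.sum_map_mul_left]
      calc (a ::ₘ s).esymm (r + 1) * (r + 1).factorial
          = s.esymm (r + 1) * (r + 1).factorial +
              (r + 1) * a * (s.esymm r * r.factorial) := by
            rw [hcons, Nat.factorial_succ]; push_cast; ring
        _ ≤ s.sum ^ (r + 1) + (r + 1) * a * s.sum ^ r := by
            gcongr
            · exact ih hs _
            · exact ih hs _
        _ ≤ (s.sum + a) ^ (r + 1) := by
            have h := pow_add_mul_le_add_pow (a := s.sum) (b := a) (by positivity)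
              (by positivity) (r + 1)
            rwa [Nat.cast_add_one, Nat.add_sub_cancel, mul_right_comm] at h
        _ = (a ::ₘ s).sum ^ (r + 1) := by rw [Multiset.sum_cons, add_comm]

variable {ι : Type*}

lemma card_filter_superset_le [Fintype ι] [DecidableEq ι]
    {𝒮 : Finset (Finset ι)} {r s : ℕ} (h𝒮 : ∀ S ∈ 𝒮, #S = r + s)
    {R : Finset ι} (hR : #R = r) : #{S ∈ 𝒮 | R ⊆ S} ≤ (Fintype.card ι).choose s := by
  rw [← card_univ, ← card_powersetCard]
  refine card_le_card_of_injOn (· \ R) (fun S hS => ?_) fun S hS S' hS' h => ?_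
  · obtain ⟨hS, hRS⟩ := mem_filter.1 hS
    simp [card_sdiff_of_subset hRS, h𝒮 S hS, hR]
  · rw [← sdiff_union_of_subset (mem_filter.1 hS).2, ← sdiff_union_of_subset (mem_filter.1 hS').2]
    exact congrArg (· ∪ R) h

lemma sum_sum_powersetCard_le [Fintype ι] {𝒮 : Finset (Finset ι)} {r s : ℕ}
    (h𝒮 : ∀ S ∈ 𝒮, #S = r + s) {f : Finset ι → ℝ} (hf : ∀ R, 0 ≤ f R) :
    ∑ S ∈ 𝒮, ∑ R ∈ S.powersetCard r, f R ≤
      (Fintype.card ι).choose s * ∑ R ∈ univ.powersetCard r, f R := by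
  classical
  rw [sum_comm' (t' := univ.powersetCard r) (s' := fun R => {S ∈ 𝒮 | R ⊆ S})
    (by grind), mul_sum]
  refine sum_le_sum fun R hR => ?_
  rw [sum_const, nsmul_eq_mul]
  have := card_filter_superset_le h𝒮 (mem_powersetCard.1 hR).2
  gcongr
  exact hf R

/-- Exponential tilting: on `S` the weight `d ^ (-ds i)` costs at most the factor `d ^ T`. -/
lemma prod_le_pow_mul_prod_rpow_neg_mul {d : ℝ} (hd : 1 ≤ d) {ds ds' : ι → ℕ} {R S : Finset ι}
    (hRS : R ⊆ S) {T : ℕ} (hT : ∑ i ∈ S, ds i ≤ T) :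
    ∏ i ∈ R, (ds' i : ℝ) ≤ d ^ T * ∏ i ∈ R, d ^ (-(ds i : ℝ)) * ds' i := by
  have hd0 : 0 < d := by linarith
  have hcancel : ∏ i ∈ R, (ds' i : ℝ) =
      d ^ (∑ i ∈ R, ds i) * ∏ i ∈ R, d ^ (-(ds i : ℝ)) * ds' i := by
    rw [← prod_pow_eq_pow_sum, ← prod_mul_distrib]
    refine prod_congr rfl fun i _ => ?_
    rw [Real.rpow_neg hd0.le, Real.rpow_natCast, mul_inv_cancel_left₀ (by positivity)]
  rw [hcancel]
  gcongr
  exact (sum_le_sum_of_subset hRS).trans hT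

end WeightedSubsets

section FirstMoment

open Finset

variable {ι : Type*} [Fintype ι] [DecidableEq ι]

lemma card_filter_mul_pow_le_tilted {ds ds' : ι → ℕ} {D D' F r T : ℕ} {d : ℝ} {S : Finset ι}
    (hd : 1 ≤ d) (hD : ∀ j, ds j ≤ D) (hD' : ∀ i, ds' i ≤ D')
    (hF : F + r + 2 * (D * D') ≤ ∑ j, ds j) (hT : ∑ i ∈ S, ds i ≤ T) :
    (#{M ∈ matricesWithSums ds ds' | r ≤ #{i ∈ S | ∃ j ∈ S, M i j}} : ℝ) * F ^ r ≤
      #(matricesWithSums ds ds') * (r.factorial * T.choose r * d ^ T) *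
        ∑ R ∈ S.powersetCard r, ∏ i ∈ R, d ^ (-(ds i : ℝ)) * ds' i := by
  calc (#{M ∈ matricesWithSums ds ds' | r ≤ #{i ∈ S | ∃ j ∈ S, M i j}} : ℝ) * F ^ r
      ≤ #(matricesWithSums ds ds') * (r.factorial * (∑ j ∈ S, ds j).choose r *
          ∑ R ∈ S.powersetCard r, ∏ i ∈ R, (ds' i : ℝ)) := by
        exact_mod_cast card_filter_mul_pow_le hD hD' S S hF
    _ ≤ #(matricesWithSums ds ds') * (r.factorial * T.choose r *
          ∑ R ∈ S.powersetCard r, d ^ T * ∏ i ∈ R, d ^ (-(ds i : ℝ)) * ds' i) := by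
        gcongr with R hR
        exact prod_le_pow_mul_prod_rpow_neg_mul hd (mem_powersetCard.1 hR).1 hT
    _ = _ := by rw [← mul_sum]; ring

theorem sum_card_filter_mul_pow_le {ds ds' : ι → ℕ} {D D' F r s T : ℕ} {d : ℝ}
    {𝒮 : Finset (Finset ι)} (hd : 1 ≤ d) (hD : ∀ j, ds j ≤ D) (hD' : ∀ i, ds' i ≤ D')
    (hF : F + r + 2 * (D * D') ≤ ∑ j, ds j) (h𝒮 : ∀ S ∈ 𝒮, #S = r + s)
    (hT : ∀ S ∈ 𝒮, ∑ i ∈ S, ds i ≤ T) :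
    (∑ S ∈ 𝒮, (#{M ∈ matricesWithSums ds ds' | r ≤ #{i ∈ S | ∃ j ∈ S, M i j}} : ℝ)) * F ^ r ≤
      #(matricesWithSums ds ds') * (T.choose r * d ^ T *
        (∑ i, d ^ (-(ds i : ℝ)) * ds' i) ^ r * (Fintype.card ι).choose s) := by
  set w : ι → ℝ := fun i => d ^ (-(ds i : ℝ)) * ds' i
  set G := matricesWithSums ds ds'
  have hw : ∀ i, 0 ≤ w i := fun i => by positivity
  have hprod : ∀ R : Finset ι, 0 ≤ ∏ i ∈ R, w i := fun R => prod_nonneg fun i _ => hw i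
  have hesymm : (∑ R ∈ univ.powersetCard r, ∏ i ∈ R, w i) * r.factorial ≤ (∑ i, w i) ^ r := by
    have h := esymm_mul_factorial_le_sum_pow (univ.val.map w) (by simpa using hw) r
    rwa [Finset.esymm_map_val] at h
  calc (∑ S ∈ 𝒮, (#{M ∈ G | r ≤ #{i ∈ S | ∃ j ∈ S, M i j}} : ℝ)) * F ^ r
      ≤ #G * (r.factorial * T.choose r * d ^ T) *
          ∑ S ∈ 𝒮, ∑ R ∈ S.powersetCard r, ∏ i ∈ R, w i := by
        rw [sum_mul, mul_sum]
        exact sum_le_sum fun S hS => card_filter_mul_pow_le_tilted hd hD hD' hF (hT S hS)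
    _ ≤ #G * (r.factorial * T.choose r * d ^ T) *
          ((Fintype.card ι).choose s * ∑ R ∈ univ.powersetCard r, ∏ i ∈ R, w i) := by
        gcongr
        exact sum_sum_powersetCard_le h𝒮 hprod
    _ = #G * (T.choose r * d ^ T * (Fintype.card ι).choose s) *
          ((∑ R ∈ univ.powersetCard r, ∏ i ∈ R, w i) * r.factorial) := by ring
    _ ≤ #G * (T.choose r * d ^ T * (Fintype.card ι).choose s) * (∑ i, w i) ^ r := by gcongr
    _ = _ := by ring

end FirstMoment

section Numerics

open Real

lemma exists_tolerance {δ : ℝ} (hδ : 0 < δ) :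
    ∃ y > 0, ∀ d ∈ Set.Icc (1 + δ) δ⁻¹, y * d ≤ 1 ∧ 16 * y ≤ d - 1 - log d := by
  have hlog : log (1 + δ) < δ := by
    linarith [log_lt_sub_one_of_pos (x := 1 + δ) (by linarith) (by linarith)]
  refine ⟨min δ ((δ - log (1 + δ)) / 16), lt_min hδ (by linarith), fun d ⟨hd, hd'⟩ => ⟨?_, ?_⟩⟩
  · calc min δ ((δ - log (1 + δ)) / 16) * d ≤ δ * δ⁻¹ := by
          gcongr
          · linarith
          · exact min_le_left _ _
      _ = 1 := mul_inv_cancel₀ hδ.ne'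
  · have hquot : log (d / (1 + δ)) ≤ d / (1 + δ) - 1 :=
      log_le_sub_one_of_pos (div_pos (by linarith) (by linarith))
    have hdiv : d / (1 + δ) - 1 ≤ d - (1 + δ) := by
      rw [div_sub_one (by positivity)]
      exact div_le_self (by linarith) (by linarith)
    rw [log_div (by linarith) (by linarith)] at hquot
    linarith [min_le_right δ ((δ - log (1 + δ)) / 16)]

lemma choose_le_exp {y : ℝ} (hy : 0 < y) (n j : ℕ) :
    (n.choose j : ℝ) ≤ exp (y * n + j * log y⁻¹) := by
  have hpow : (n.choose j : ℝ) * y ^ j ≤ exp (y * n) :=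
    calc (n.choose j : ℝ) * y ^ j ≤ n ^ j / j.factorial * y ^ j := by
          gcongr
          exact Nat.choose_le_pow_div j n
      _ = (y * n) ^ j / j.factorial := by ring
      _ ≤ exp (y * n) := pow_div_factorial_le_exp _ (by positivity) j
  rw [exp_add, exp_nat_mul, exp_log (inv_pos.2 hy), inv_pow, ← div_eq_mul_inv]
  exact (le_div_iff₀ (by positivity)).2 hpow

lemma choose_le_exp_of_near {y k : ℝ} (hy : 0 < y) (hy1 : y ≤ 1) (hk : 0 ≤ k)
    {T r : ℕ} (hT : T ≤ (1 + y ^ 2) * k) (hr : (1 - y ^ 2) * k ≤ r) :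
    (T.choose r : ℝ) ≤ exp (4 * y * k) := by
  obtain hTr | hrT := lt_or_ge T r
  · simp [Nat.choose_eq_zero_of_lt hTr, exp_nonneg]
  have hdiff : ((T - r : ℕ) : ℝ) ≤ 2 * y ^ 2 * k := by
    rw [Nat.cast_sub hrT]
    linarith
  have hlog : log y⁻¹ ≤ y⁻¹ := log_le_self (by positivity)
  have hlog0 : 0 ≤ log y⁻¹ := log_nonneg ((one_le_inv₀ hy).2 hy1)
  rw [← Nat.choose_symm hrT]
  refine (choose_le_exp hy T (T - r)).trans (exp_le_exp.2 ?_)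
  calc y * T + (T - r : ℕ) * log y⁻¹
      ≤ y * ((1 + y ^ 2) * k) + 2 * y ^ 2 * k * y⁻¹ := by gcongr
    _ = (3 + y ^ 2) * (y * k) := by field_simp; ring
    _ ≤ (3 + 1) * (y * k) := by gcongr; nlinarith
    _ = 4 * y * k := by ring

lemma choose_le_exp_of_le {a : ℝ} {n j : ℕ} (ha : 0 < a) (han : a ≤ n) (hj : j ≤ a) :
    (n.choose j : ℝ) ≤ exp (a * (1 + log (n / a))) := by
  have hn : 0 < (n : ℝ) := ha.trans_le han
  refine (choose_le_exp (div_pos ha hn) n j).trans (exp_le_exp.2 ?_)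
  have hlog : 0 ≤ log (n / a) := log_nonneg ((one_le_div ha).2 han)
  rw [inv_div, div_mul_cancel₀ _ hn.ne', mul_one_add]
  gcongr

lemma pow_le_exp_mul_log_add {y d k : ℝ} {T : ℕ} (hy : 0 ≤ y) (hk : 0 ≤ k) (hd : 1 ≤ d)
    (hyd : y * d ≤ 1) (hT : T ≤ (1 + y ^ 2) * k) : d ^ T ≤ exp (k * (log d + y)) := by
  have hd0 : 0 < d := by linarith
  have hlogd : 0 ≤ log d := log_nonneg hd
  have hylog : y * log d ≤ 1 := (mul_le_mul_of_nonneg_left (log_le_self hd0.le) hy).trans hyd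
  rw [← rpow_natCast, rpow_def_of_pos hd0, exp_le_exp, mul_comm]
  calc T * log d ≤ (1 + y ^ 2) * k * log d := by gcongr
    _ = k * (log d + y * (y * log d)) := by ring
    _ ≤ k * (log d + y * 1) := by gcongr
    _ = k * (log d + y) := by rw [mul_one]

lemma pow_le_exp_mul_mul_pow {y d k A F : ℝ} {r : ℕ} (hy : 0 ≤ y) (hk : 0 ≤ k)
    (hyd : y * d ≤ 1) (hd : 1 + y ≤ d) (hr : (1 - y ^ 2) * k ≤ r) (hA : 0 ≤ A) (hF : 0 ≤ F)
    (hAF : A ≤ exp (1 - d + y) * F) : A ^ r ≤ exp (k * (1 - d + 2 * y)) * F ^ r := by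
  have hexp : r * (1 - d + y) ≤ k * (1 - d + 2 * y) :=
    calc r * (1 - d + y) ≤ (1 - y ^ 2) * k * (1 - d + y) :=
          mul_le_mul_of_nonpos_right hr (by linarith)
      _ = k * (1 - d + y + y * (y * d - y - y ^ 2)) := by ring
      _ ≤ k * (1 - d + y + y * 1) := by gcongr; nlinarith
      _ = k * (1 - d + 2 * y) := by ring
  calc A ^ r ≤ (exp (1 - d + y) * F) ^ r := by gcongr
    _ = exp (r * (1 - d + y)) * F ^ r := by rw [mul_pow, ← exp_nat_mul]
    _ ≤ exp (k * (1 - d + 2 * y)) * F ^ r := by gcongr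

/-- With every parameter within `y` of its ideal value, the exponent of the first-moment bound is
`k * (log d + 1 - d)` up to an error of `8 * y * k`. -/
lemma choose_mul_pow_mul_pow_mul_choose_le {y d k A F : ℝ} {T r m s : ℕ} (hy : 0 < y)
    (hk : 0 ≤ k) (hd : 1 ≤ d) (hyd : y * d ≤ 1) (hgap : 16 * y ≤ d - 1 - log d)
    (hT : T ≤ (1 + y ^ 2) * k) (hr : (1 - y ^ 2) * k ≤ r) (hA : 0 ≤ A) (hF : 0 ≤ F)
    (hAF : A ≤ exp (1 - d + y) * F) (hs : (m.choose s : ℝ) ≤ exp (y * k)) :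
    T.choose r * d ^ T * A ^ r * m.choose s ≤ exp (-(8 * y * k)) * F ^ r := by
  have hy1 : y ≤ 1 := by nlinarith
  have hyd' : 1 + y ≤ d := by linarith [log_nonneg hd]
  calc T.choose r * d ^ T * A ^ r * m.choose s
      ≤ exp (4 * y * k) * exp (k * (log d + y)) * (exp (k * (1 - d + 2 * y)) * F ^ r) *
          exp (y * k) := by
        gcongr
        · exact choose_le_exp_of_near hy hy1 hk hT hr
        · exact pow_le_exp_mul_log_add hy.le hk hd hyd hT
        · exact pow_le_exp_mul_mul_pow hy.le hk hyd hyd' hr hA hF hAF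
    _ = exp (k * (8 * y + log d + 1 - d)) * F ^ r := by
        rw [mul_right_comm, ← mul_assoc, ← exp_add, ← exp_add, ← exp_add]
        ring_nf
    _ ≤ exp (-(8 * y * k)) * F ^ r := by
        gcongr
        nlinarith

end Numerics

section SparseSets

open Finset

variable {ι : Type*} [Fintype ι]

/-- The sets `S` of `k` indices of total degree at most `t` such that at most `u` rows of `S` vanish
on `S`. These rows form `U(S) ∩ S`; the first-moment bound needs no other unique neighbours. -/
noncomputable def sparseSets (ds : ι → ℕ) (M : ι → ι → Bool) (k : ℕ) (t u : ℝ) :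
    Finset (Finset ι) :=
  {S | #S = k ∧ ∑ i ∈ S, (ds i : ℝ) ≤ t ∧ (#{i ∈ S | ∀ j ∈ S, M i j = false} : ℝ) ≤ u}

lemma mem_sparseSets {ds : ι → ℕ} {M : ι → ι → Bool} {k : ℕ} {t u : ℝ} {S : Finset ι} :
    S ∈ sparseSets ds M k t u ↔
      #S = k ∧ ∑ i ∈ S, (ds i : ℝ) ≤ t ∧ (#{i ∈ S | ∀ j ∈ S, M i j = false} : ℝ) ≤ u := by
  simp [sparseSets]

lemma card_sparseSets_zero_le (ds : ι → ℕ) (M : ι → ι → Bool) (t u : ℝ) :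
    #(sparseSets ds M 0 t u) ≤ 1 :=
  card_le_one.2 fun S hS S' hS' => by
    rw [card_eq_zero.1 (mem_sparseSets.1 hS).1, card_eq_zero.1 (mem_sparseSets.1 hS').1]

lemma sub_floor_le_card_filter_exists {ds : ι → ℕ} {M : ι → ι → Bool} {k : ℕ} {t u : ℝ}
    {S : Finset ι} (hS : S ∈ sparseSets ds M k t u) :
    k - ⌊u⌋₊ ≤ #{i ∈ S | ∃ j ∈ S, M i j} := by
  obtain ⟨hcard, -, hu⟩ := mem_sparseSets.1 hS
  have hsplit := card_filter_add_card_filter_not (s := S) (fun i => ∃ j ∈ S, M i j)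
  simp only [not_exists, not_and, Bool.not_eq_true] at hsplit
  have := Nat.le_floor hu
  omega

lemma sum_card_sparseSets_mul_pow_le [DecidableEq ι] {ds ds' : ι → ℕ} {D D' F k : ℕ} {d t u : ℝ}
    (hd : 1 ≤ d) (hD : ∀ j, ds j ≤ D) (hD' : ∀ i, ds' i ≤ D')
    (hF : F + k + 2 * (D * D') ≤ ∑ j, ds j) (hu : ⌊u⌋₊ ≤ k) :
    (∑ M ∈ matricesWithSums ds ds', (#(sparseSets ds M k t u) : ℝ)) * F ^ (k - ⌊u⌋₊) ≤
      #(matricesWithSums ds ds') * ((⌊t⌋₊).choose (k - ⌊u⌋₊) * d ^ ⌊t⌋₊ *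
        (∑ i, d ^ (-(ds i : ℝ)) * ds' i) ^ (k - ⌊u⌋₊) * (Fintype.card ι).choose ⌊u⌋₊) := by
  let 𝒮 : Finset (Finset ι) := {S | #S = k ∧ ∑ i ∈ S, ds i ≤ ⌊t⌋₊}
  have hcount : ∑ M ∈ matricesWithSums ds ds', #(sparseSets ds M k t u) ≤
      ∑ S ∈ 𝒮, #{M ∈ matricesWithSums ds ds' | k - ⌊u⌋₊ ≤ #{i ∈ S | ∃ j ∈ S, M i j}} := by
    calc ∑ M ∈ matricesWithSums ds ds', #(sparseSets ds M k t u)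
        ≤ ∑ M ∈ matricesWithSums ds ds',
            #{S ∈ 𝒮 | k - ⌊u⌋₊ ≤ #{i ∈ S | ∃ j ∈ S, M i j}} := by
          refine sum_le_sum fun M _ => card_le_card fun S hS => mem_filter.2 ⟨?_, ?_⟩
          · obtain ⟨hcard, ht, -⟩ := mem_sparseSets.1 hS
            exact mem_filter.2 ⟨mem_univ _, hcard, Nat.le_floor (by exact_mod_cast ht)⟩
          · exact sub_floor_le_card_filter_exists hS
      _ = _ := by
          simp only [card_filter]
          exact sum_comm
  refine (mul_le_mul_of_nonneg_right (by exact_mod_cast hcount) (by positivity)).trans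
    (sum_card_filter_mul_pow_le hd hD hD' (by omega) (fun S hS => ?_) fun S hS => ?_)
  · simp only [𝒮, mem_filter] at hS
    omega
  · exact (mem_filter.1 hS).2.2

lemma ncard_le_card_sparseSets {m : ℕ} (ds : Fin m → ℕ) (M : Fin m → Fin m → Bool) (k : ℕ)
    (a u : ℝ) :
    {S : Finset (Fin m) | #S = k ∧ |∑ i ∈ S, (ds i : ℝ) - k| ≤ a ∧
      ((uniqueNbrSetB M S).ncard : ℝ) ≤ u}.ncard ≤ #(sparseSets ds M k (k + a) u) := by
  rw [← Set.ncard_coe_finset]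
  refine Set.ncard_le_ncard (fun S ⟨hcard, hdeg, hU⟩ => mem_sparseSets.2 ⟨hcard, ?_, ?_⟩)
  · linarith [le_abs_self (∑ i ∈ S, (ds i : ℝ) - k)]
  · refine le_trans ?_ hU
    rw [← Set.ncard_coe_finset]
    refine Nat.cast_le.2 (Set.ncard_le_ncard fun i hi => Or.inl ?_)
    simpa using hi

end SparseSets

section Parameters

open Real Filter Topology Asymptotics

lemma eventually_le_log_and_sq_log_le (a b C : ℝ) {η : ℝ} (hη : 0 < η) :
    ∀ᶠ x in atTop, a ≤ log (x / 2) ∧ 2 * (C * (b + log x)) ^ 2 ≤ η * x := by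
  have hlog : (fun x => C * (b + log x)) =O[atTop] log :=
    ((isLittleO_const_log_atTop.isBigO).add (isBigO_refl _ _)).const_mul_left C
  have hsq : (fun x => 2 * (C * (b + log x)) ^ 2) =o[atTop] id :=
    ((hlog.pow 2).const_mul_left 2).trans_isLittleO isLittleO_pow_log_id_atTop
  filter_upwards [(tendsto_log_atTop.comp (tendsto_id.atTop_div_const two_pos)).eventually_ge_atTop
    a, hsq.bound hη, eventually_ge_atTop 0] with x hx hx' hx0
  exact ⟨hx, by simpa [abs_of_nonneg hx0, mul_pow] using hx'⟩

lemma exists_small_forall_ge_inv {p : ℝ → Prop} (hp : ∀ᶠ x in atTop, p x) {ε : ℝ} (hε : 0 < ε) :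
    ∃ c ∈ Set.Ioc 0 ε, ∀ x ≥ c⁻¹, p x :=
  (Filter.Eventually.and (Ioc_mem_nhdsGT hε)
    (tendsto_inv_nhdsGT_zero.eventually (eventually_forall_ge_atTop.2 hp))).exists

lemma le_log_div_of_le_log_div_div_two {a k m n : ℝ} (hk : 0 < k) (hm : 0 < m)
    (hmn : m ≤ 2 * n) (hlog : a ≤ log (m / k / 2)) : a ≤ log (n / k) := by
  refine hlog.trans (log_le_log (by positivity) ?_)
  rw [div_right_comm]
  gcongr
  linarith

lemma floor_sq_le_sq (x : ℝ) : (⌊x⌋₊ : ℝ) ^ 2 ≤ x ^ 2 := by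
  rw [← sq_abs x]
  gcongr
  exact (Nat.cast_le.2 (Nat.floor_le_floor (le_abs_self x))).trans (Nat.floor_le (abs_nonneg x))

lemma div_sqrt_le_sq_mul {y x k : ℝ} (hy : 0 < y) (hk : 0 ≤ k) (hx : 5 / y ^ 4 ≤ x) :
    k / √x ≤ y ^ 2 * k := by
  have hsqrt : 1 / y ^ 2 ≤ √x := by
    refine le_sqrt_of_sq_le (le_trans ?_ hx)
    rw [div_pow, ← pow_mul]
    gcongr
    norm_num
  calc k / √x ≤ k / (1 / y ^ 2) := by gcongr
    _ = y ^ 2 * k := by field_simp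

lemma alphaFn_mem_Ioc {y x : ℝ} {n : ℕ} (hy : 0 < y) (hy1 : y ≤ 1)
    (hlog : 5 / y ^ 4 ≤ log (n / x)) : alphaFn n x ∈ Set.Ioc 0 (y ^ 2) := by
  have hL : y⁻¹ ≤ log (n / x) := by
    refine le_trans ?_ hlog
    rw [le_div_iff₀ (by positivity)]
    have : y ^ 3 ≤ 1 := pow_le_one₀ hy.le hy1
    calc y⁻¹ * y ^ 4 = y ^ 3 := by field_simp
      _ ≤ 5 := by linarith
  have hL0 : 0 < log (n / x) := (inv_pos.2 hy).trans_le hL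
  refine ⟨by unfold alphaFn; positivity, ?_⟩
  rw [alphaFn, inv_le_comm₀ (by positivity) (by positivity), ← inv_pow]
  gcongr

lemma alphaFn_mul_one_add_log_le {y x : ℝ} {m n : ℕ} (hy : 0 < y) (hy1 : y ≤ 1) (hx : 0 < x)
    (hm : 0 < (m : ℝ)) (hmn : (m : ℝ) ≤ 2 * n) (hlog : 5 / y ^ 4 ≤ log (n / x)) :
    alphaFn n x * (1 + log (m / (alphaFn n x * x))) ≤ y := by
  have hn : (0 : ℝ) < n := by linarith
  have hα : alphaFn n x = (log (n / x) ^ 2)⁻¹ := rfl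
  set L := log (n / x)
  have h5L : 5 / y ≤ L := by
    refine le_trans ?_ hlog
    gcongr
    exact pow_le_of_le_one hy.le hy1 (by norm_num)
  have hL0 : 0 < L := by linarith [div_pos (by norm_num : (0 : ℝ) < 5) hy]
  have hL1 : 1 ≤ L := by
    have : 1 ≤ 5 / y := by rw [le_div_iff₀ hy]; linarith
    linarith
  rw [hα]
  have hlogm : log (m / ((L ^ 2)⁻¹ * x)) ≤ 1 + 3 * L :=
    calc log (m / ((L ^ 2)⁻¹ * x)) ≤ log (2 * (n / x) * L ^ 2) := by
          refine log_le_log (by positivity) ?_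
          calc m / ((L ^ 2)⁻¹ * x) = m / x * L ^ 2 := by field_simp
            _ ≤ 2 * n / x * L ^ 2 := by gcongr
            _ = _ := by ring
      _ = log 2 + L + 2 * log L := by
          rw [log_mul (by positivity) (by positivity), log_mul (by norm_num) (by positivity),
            log_pow, Nat.cast_ofNat]
      _ ≤ 1 + 3 * L := by linarith [log_le_self hL0.le, log_two_lt_d9]
  calc (L ^ 2)⁻¹ * (1 + log (m / ((L ^ 2)⁻¹ * x)))
      ≤ (L ^ 2)⁻¹ * (1 + (1 + 3 * L)) := by gcongr
    _ ≤ (L ^ 2)⁻¹ * (5 * L) := by gcongr; linarith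
    _ = 5 / L := by field_simp
    _ ≤ y := by rwa [div_le_comm₀ hL0 hy]

lemma floor_alphaFn_mul_le {y x : ℝ} {n : ℕ} (hy : 0 < y) (hy1 : y ≤ 1) (hx : 0 < x)
    (hlog : 5 / y ^ 4 ≤ log (n / x)) : (⌊alphaFn n x * x⌋₊ : ℝ) ≤ y ^ 2 * x := by
  obtain ⟨hα, hαy⟩ := alphaFn_mem_Ioc hy hy1 hlog
  exact (Nat.floor_le (by positivity)).trans (by gcongr)

lemma choose_floor_alphaFn_mul_le_exp {y x : ℝ} {m n : ℕ} (hy : 0 < y) (hy1 : y ≤ 1) (hx : 0 < x)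
    (hxm : x ≤ m) (hmn : (m : ℝ) ≤ 2 * n) (hlog : 5 / y ^ 4 ≤ log (n / x)) :
    (m.choose ⌊alphaFn n x * x⌋₊ : ℝ) ≤ exp (y * x) := by
  obtain ⟨hα, hαy⟩ := alphaFn_mem_Ioc hy hy1 hlog
  have hα1 : alphaFn n x ≤ 1 := hαy.trans (pow_le_one₀ hy.le hy1)
  refine (choose_le_exp_of_le (by positivity) ((mul_le_of_le_one_left hx.le hα1).trans hxm)
    (Nat.floor_le (by positivity))).trans (exp_le_exp.2 ?_)
  rw [mul_right_comm]
  gcongr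
  exact alphaFn_mul_one_add_log_le hy hy1 hx (hx.trans_le hxm) hmn hlog

/-- Bounds the tilted total degree by the number of available switchings. -/
lemma sub_pos_and_mul_le_exp_mul_sub {y c d m N k K : ℝ} (hy : 0 < y) (hy1 : y ≤ 1)
    (hc : c ≤ y / 16) (hd : 1 ≤ d) (hm : 0 < m) (hk : k ≤ c * m) (hK : K ≤ y / 4 * m)
    (hN : (1 - c) * (d * m) ≤ N) : 0 < N - k - K ∧
      (1 + c) * (exp 1 * d * exp (-d) * m) ≤ exp (1 - d + y) * (N - k - K) := by
  have hdm : m ≤ d * m := le_mul_of_one_le_left hm.le hd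
  have hlower : (1 - 3 / 8 * y) * (d * m) ≤ N - k - K := by nlinarith
  have hpos : 0 < N - k - K := lt_of_lt_of_le (by nlinarith) hlower
  refine ⟨hpos, ?_⟩
  calc (1 + c) * (exp 1 * d * exp (-d) * m) = exp (1 - d) * ((1 + c) * (d * m)) := by
        rw [sub_eq_add_neg, exp_add]; ring
    _ ≤ exp (1 - d) * ((1 + y) * ((1 - 3 / 8 * y) * (d * m))) := by
        rw [← mul_assoc (1 + y)]
        gcongr
        nlinarith
    _ ≤ exp (1 - d) * ((1 + y) * (N - k - K)) := by gcongr
    _ ≤ exp (1 - d) * (exp y * (N - k - K)) := by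
        gcongr
        linarith [add_one_le_exp y]
    _ = exp (1 - d + y) * (N - k - K) := by rw [exp_add, mul_assoc]

end Parameters

section UniqueNeighbours

open Finset Real

lemma sum_card_sparseSets_le_mul_exp {ι : Type*} [Fintype ι] [DecidableEq ι] {ds ds' : ι → ℕ}
    {D k : ℕ} {y c d t u : ℝ} (hy : 0 < y) (hc : c ≤ y / 16) (hd : 1 ≤ d) (hyd : y * d ≤ 1)
    (hgap : 16 * y ≤ d - 1 - log d) (hι : 0 < (Fintype.card ι : ℝ))
    (hk : k ≤ c * Fintype.card ι) (hD : ∀ i, ds i ≤ D) (hD' : ∀ i, ds' i ≤ D)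
    (hDι : 2 * (D : ℝ) ^ 2 ≤ y / 4 * Fintype.card ι)
    (hN : (1 - c) * (d * Fintype.card ι) ≤ ∑ i, (ds i : ℝ))
    (hA : ∑ i, d ^ (-(ds i : ℝ)) * ds' i ≤ (1 + c) * (exp 1 * d * exp (-d) * Fintype.card ι))
    (ht : t ≤ (1 + y ^ 2) * k) (hu : (⌊u⌋₊ : ℝ) ≤ y ^ 2 * k)
    (hchoose : ((Fintype.card ι).choose ⌊u⌋₊ : ℝ) ≤ exp (y * k)) :
    ∑ M ∈ matricesWithSums ds ds', (#(sparseSets ds M k t u) : ℝ) ≤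
      #(matricesWithSums ds ds') * exp (-(8 * y * k)) := by
  have hy1 : y ≤ 1 := by nlinarith
  obtain ⟨hpos, hAF⟩ := sub_pos_and_mul_le_exp_mul_sub hy hy1 hc hd hι hk hDι hN
  obtain ⟨F, hF⟩ : ∃ F, ∑ i, ds i = k + 2 * (D * D) + F := by
    refine Nat.exists_eq_add_of_le (Nat.cast_le (α := ℝ).1 ?_)
    push_cast
    linarith
  have hFR : ∑ i, (ds i : ℝ) - k - 2 * (D : ℝ) ^ 2 = F := by
    rw [← Nat.cast_sum, hF]
    push_cast
    ring
  rw [hFR] at hpos hAF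
  have huk : ⌊u⌋₊ ≤ k := Nat.cast_le (α := ℝ).1 <|
    hu.trans (mul_le_of_le_one_left k.cast_nonneg (pow_le_one₀ hy.le hy1))
  refine le_of_mul_le_mul_right ?_ (pow_pos hpos (k - ⌊u⌋₊))
  refine (sum_card_sparseSets_mul_pow_le hd hD hD' (F := F) (by omega) huk).trans ?_
  rw [mul_assoc (#_ : ℝ)]
  refine mul_le_mul_of_nonneg_left ?_ (Nat.cast_nonneg _)
  exact choose_mul_pow_mul_pow_mul_choose_le hy k.cast_nonneg hd hyd hgap
    ((Nat.cast_le.2 (Nat.floor_le_floor ht)).trans (Nat.floor_le (by positivity)))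
    (by rw [Nat.cast_sub huk]; linarith) (by positivity) hpos.le (hA.trans hAF) hchoose

lemma sum_card_sparseSets_alphaFn_le_mul_exp {y c d : ℝ} {n m k D : ℕ} {ds ds' : Fin m → ℕ}
    (hy : 0 < y) (hc : c ∈ Set.Ioc 0 (y / 16)) (hd : 1 ≤ d) (hyd : y * d ≤ 1)
    (hgap : 16 * y ≤ d - 1 - log d) (hk : 0 < k) (hkm : k ≤ c * m) (hmn : (m : ℝ) ≤ 2 * n)
    (hlog : 5 / y ^ 4 ≤ log (m / k / 2)) (hD : ∀ i, ds i ≤ D) (hD' : ∀ i, ds' i ≤ D)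
    (hDm : 2 * (D : ℝ) ^ 2 ≤ y / 4 * m) (hN : (1 - c) * (d * m) ≤ ∑ i, (ds i : ℝ))
    (hA : ∑ i, d ^ (-(ds i : ℝ)) * ds' i ≤ (1 + c) * (exp 1 * d * exp (-d) * m)) :
    ∑ M ∈ matricesWithSums ds ds',
        (#(sparseSets ds M k (k + k / √(log (m / k))) (alphaFn n k * k)) : ℝ) ≤
      #(matricesWithSums ds ds') * exp (-(c * k)) := by
  obtain ⟨hc0, hcy⟩ := hc
  have hk0 : (0 : ℝ) < k := Nat.cast_pos.2 hk
  have hm : (0 : ℝ) < m := pos_of_mul_pos_right (hk0.trans_le hkm) hc0.le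
  have hy1 : y ≤ 1 := by nlinarith
  have hlogn : 5 / y ^ 4 ≤ log (n / k) := le_log_div_of_le_log_div_div_two hk0 hm hmn hlog
  have hlogm : 5 / y ^ 4 ≤ log (m / k) :=
    le_log_div_of_le_log_div_div_two hk0 hm (by linarith) hlog
  have ht : k + k / √(log (m / k)) ≤ (1 + y ^ 2) * k := by
    linarith [div_sqrt_le_sq_mul hy hk0.le hlogm]
  have hchoose : (m.choose ⌊alphaFn n k * k⌋₊ : ℝ) ≤ exp (y * k) :=
    choose_floor_alphaFn_mul_le_exp hy hy1 hk0 (by nlinarith) hmn hlogn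
  have hcard : (m : ℝ) = Fintype.card (Fin m) := by rw [Fintype.card_fin]
  rw [hcard] at hm hkm hDm hN hA
  refine (sum_card_sparseSets_le_mul_exp hy hcy hd hyd hgap hm hkm hD hD' hDm hN hA ht
    (floor_alphaFn_mul_le hy hy1 hk0 hlogn) (by rwa [Fintype.card_fin])).trans ?_
  gcongr
  linarith

theorem unique_neighbour_expansion_config_general (δ C : ℝ) (hδ : 0 < δ) :
    ∃ c ∈ Set.Ioc (0 : ℝ) 1, ∀ (d : ℝ) (n m : ℕ) (ds ds' : Fin m → ℕ),
      d ∈ Set.Icc (1 + δ) δ⁻¹ → (m : ℝ) ≤ (1 + c) * n →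
      (∀ i, (ds i : ℝ) ≤ C * (d + log m)) → (∀ i, (ds' i : ℝ) ≤ C * (d + log m)) →
      (1 - c) * (d * m) ≤ ∑ i, (ds i : ℝ) →
      ∑ i, d ^ (-(ds i : ℝ)) * ds' i ≤ (1 + c) * (exp 1 * d * exp (-d) * m) →
      ∀ k : ℕ, (k : ℝ) ≤ c * m →
        ∑ M ∈ matricesWithSums ds ds',
            (#(sparseSets ds M k (k + k / √(log (m / k))) (alphaFn n k * k)) : ℝ) ≤
          #(matricesWithSums ds ds') * exp (-(c * k)) := by
  obtain ⟨y, hy, hyd⟩ := exists_tolerance hδ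
  obtain ⟨c, ⟨hc0, hc⟩, hlarge⟩ := exists_small_forall_ge_inv
    (eventually_le_log_and_sq_log_le (5 / y ^ 4) δ⁻¹ C (div_pos hy four_pos))
    (lt_min one_pos (div_pos hy (by norm_num : (0 : ℝ) < 16)))
  obtain ⟨hc1, hcy⟩ := le_min_iff.1 hc
  refine ⟨c, ⟨hc0, hc1⟩, fun d n m ds ds' hd hmn hD hD' hN hA k hkm => ?_⟩
  obtain rfl | hk := k.eq_zero_or_pos
  · simpa using sum_le_sum fun M (_ : M ∈ matricesWithSums ds ds') =>
      (Nat.cast_le (α := ℝ)).2 (card_sparseSets_zero_le ds M _ _)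
  have hd1 : 1 ≤ d := by linarith [hd.1]
  have hk1 : (1 : ℝ) ≤ k := Nat.one_le_cast.2 hk
  have hcmk : c⁻¹ ≤ m / k := by
    rwa [le_div_iff₀ (by positivity), inv_mul_le_iff₀ hc0]
  have hcm : c⁻¹ ≤ m := hcmk.trans (div_le_self m.cast_nonneg hk1)
  have hlogm : 0 ≤ log m := log_nonneg (((one_le_inv₀ hc0).2 hc1).trans hcm)
  have hDm : 2 * (⌊C * (d + log m)⌋₊ : ℝ) ^ 2 ≤ y / 4 * m :=
    calc 2 * (⌊C * (d + log m)⌋₊ : ℝ) ^ 2 ≤ 2 * (C ^ 2 * (d + log m) ^ 2) := by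
          rw [← mul_pow]
          gcongr 2 * ?_
          exact floor_sq_le_sq _
      _ ≤ 2 * (C ^ 2 * (δ⁻¹ + log m) ^ 2) := by
          have : 0 ≤ d + log m := by linarith
          gcongr
          exact hd.2
      _ = 2 * (C * (δ⁻¹ + log m)) ^ 2 := by rw [mul_pow]
      _ ≤ y / 4 * m := (hlarge m hcm).2
  exact sum_card_sparseSets_alphaFn_le_mul_exp hy ⟨hc0, hcy⟩ hd1 (hyd d hd).1 (hyd d hd).2 hk hkm
    (hmn.trans (by gcongr; linarith)) (hlarge _ hcmk).1 (fun i => Nat.le_floor (hD i))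
    (fun i => Nat.le_floor (hD' i)) hDm hN hA

end UniqueNeighbours

namespace DegRegular

variable {n m : ℕ} {ds ds' : Fin m → ℕ} {d μ C : ℝ}

lemma length_le (h : DegRegular n m ds ds' d μ C) (hn : 0 < n) : (m : ℝ) ≤ (1 + μ) * n :=
  (div_le_iff₀ (Nat.cast_pos.2 hn)).1 h.1.2

lemma degree_add_degree_le (h : DegRegular n m ds ds' d μ C) (i : Fin m) :
    (ds i + ds' i : ℝ) ≤ C * (d + Real.log m) := by
  simpa using h.2.1 {i} (Finset.singleton_nonempty i)

end DegRegular

theorem unique_neighbour_expansion_config (δ C : ℝ) (hδ : 0 < δ) (hC : 0 < C) :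
    ∃ c : ℝ, 0 < c ∧
      ∀ (d : ℝ) (n m : ℕ) (ds ds' : Fin m → ℕ),
        d ∈ Set.Icc (1 + δ) δ⁻¹ → 0 < n →
        DegRegular n m ds ds' d c C →
        ∀ G : Finset (Fin m → Fin m → Bool),
          (∀ M, M ∈ G ↔ ((∀ j, colSum M j = ds j) ∧ ∀ i, rowSum M i = ds' i)) →
          G.Nonempty →
          ∀ k : ℕ, (k : ℝ) ≤ c * m →
            (G.card : ℝ)⁻¹ *
              ∑ M ∈ G, (({S : Finset (Fin m) | S.card = k ∧
                  |(∑ i ∈ S, (ds i : ℝ)) - k| ≤ k / Real.sqrt (Real.log ((m : ℝ) / k)) ∧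
                  ((uniqueNbrSetB M S).ncard : ℝ) ≤ alphaFn n k * k}).ncard : ℝ)
              ≤ c⁻¹ * Real.exp (-(c * k)) := by
  obtain ⟨c, ⟨hc0, hc1⟩, hbound⟩ := unique_neighbour_expansion_config_general δ C hδ
  refine ⟨c, hc0, fun d n m ds ds' hd hn hreg G hG hGne k hk => ?_⟩
  obtain rfl : G = matricesWithSums ds ds' := by
    ext M
    simp only [hG, mem_matricesWithSums, rowSum_eq_card_rowSupport, colSum_eq_card_colSupport]
  have hdeg := hreg.degree_add_degree_le
  have hsum := hbound d n m ds ds' hd (hreg.length_le hn)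
    (fun i => by linarith [hdeg i, (ds' i).cast_nonneg (α := ℝ)])
    (fun i => by linarith [hdeg i, (ds i).cast_nonneg (α := ℝ)])
    hreg.2.2.1.1 hreg.2.2.2.2.2 k hk
  rw [inv_mul_le_iff₀ (Nat.cast_pos.2 hGne.card_pos)]
  refine (Finset.sum_le_sum fun M _ => Nat.cast_le.2 (ncard_le_card_sparseSets ds M k _ _)).trans
    (hsum.trans ?_)
  gcongr
  exact le_mul_of_one_le_left (Real.exp_nonneg _) ((one_le_inv₀ hc0).2 hc1)
end

section
/- Fix d > 0. Let A be an n×n random matrix with independent Ber(d/n) entries, regarded as the adjacency matrix of a digraph on [n] (with (i,j) an edge iff A_{ij} = 1). Then for every K > 0 and every γ > 1/2, there exists N such that for all n ≥ N, with probability at least 1 − n^{−K} the following holds simultaneously for all integers x, y ≥ 0: |#{ i ∈ [n] : (deg⁺_A(i), deg⁻_A(i)) = (x, y) } − (d^x e^{−d}/x!)·(d^y e^{−d}/y!)·n| ≤ n^γ. -/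
open MeasureTheory

/-- The Bernoulli measure on `ℝ`, putting mass `p` at `1` and mass `1 - p` at `0`. -/
noncomputable def bernoulliR (p : ℝ) : Measure ℝ :=
  ENNReal.ofReal p • Measure.dirac 1 + ENNReal.ofReal (1 - p) • Measure.dirac 0

/-- The law of an `n × n` matrix with iid `Ber(p)` entries. -/
noncomputable def iidMatrixLawR (n : ℕ) (p : ℝ) : Measure (Fin n → Fin n → ℝ) :=
  Measure.pi fun _ => Measure.pi fun _ => bernoulliR p

/-!
The out-degree and the in-degree of a vertex are sums of `Ber(d / n)` indicators that share only the
loop. A `Ber(p)` variable is within `p ^ 2` of `Po(p)` in total variation, so the joint law of the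
two degrees is within `O(1 / n)` of `Po(d) ⊗ Po(d)`, and each expected count is within `O(1)` of its
Poisson target.

Changing one edge changes a count by at most `2`. McDiarmid's inequality over the `n ^ 2` edges
would only give deviations of order `n`; what helps is that each edge indicator has variance at most
`d / n`. Integrating out one edge at a time, the centred count `Z` satisfies
`𝔼 exp (l Z) ≤ exp (n ^ 2 * (d / n) * (2 l) ^ 2)` for `|l| ≤ 1 / 2`, and `l = ± n ^ (-1 / 2)` gives
deviations of order `n ^ γ` with probability at most `2 exp (O(1) - n ^ (γ - 1 / 2) / 2)`. A union
bound over the at most `(n + 1) ^ 2` pairs of degrees that can occur beats every power of `n`.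
-/

section TotalVariation

open scoped ENNReal

variable {α β : Type*} [MeasurableSpace α] [MeasurableSpace β]

/-- `μ` and `ν` are within total variation distance `ε`. The bound is one-sided because, for
probability measures, the other side follows by passing to complements (`IsTVClose.symm`). -/
def IsTVClose (μ ν : Measure α) (ε : ℝ≥0∞) : Prop :=
  ∀ s, MeasurableSet s → μ s ≤ ν s + ε

namespace IsTVClose

variable {μ ν ρ : Measure α} {μ' ν' : Measure β} {ε δ : ℝ≥0∞}

theorem symm [IsProbabilityMeasure μ] [IsProbabilityMeasure ν] (h : IsTVClose μ ν ε) :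
    IsTVClose ν μ ε := by
  intro s hs
  have hcompl := h sᶜ hs.compl
  rw [prob_compl_eq_one_sub hs, prob_compl_eq_one_sub hs, tsub_le_iff_right] at hcompl
  refine (ENNReal.add_le_add_iff_left (measure_ne_top ν sᶜ)).1 ?_
  calc ν sᶜ + ν s = 1 := by rw [add_comm, prob_add_prob_compl hs]
    _ ≤ 1 - ν s + ε + μ s := hcompl
    _ = ν sᶜ + (μ s + ε) := by rw [prob_compl_eq_one_sub hs]; ring

theorem trans (h : IsTVClose μ ν ε) (h' : IsTVClose ν ρ δ) : IsTVClose μ ρ (ε + δ) :=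
  fun s hs ↦ calc
    μ s ≤ ν s + ε := h s hs
    _ ≤ ρ s + δ + ε := by gcongr; exact h' s hs
    _ = ρ s + (ε + δ) := by ring

theorem map (h : IsTVClose μ ν ε) {f : α → β} (hf : Measurable f) :
    IsTVClose (μ.map f) (ν.map f) ε := by
  intro s hs
  rw [Measure.map_apply hf hs, Measure.map_apply hf hs]
  exact h _ (hf hs)

theorem map_of_measure_ne_le {f g : α → β} (hf : Measurable f) (hg : Measurable g)
    (h : μ {a | f a ≠ g a} ≤ ε) : IsTVClose (μ.map f) (μ.map g) ε := by
  intro s hs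
  rw [Measure.map_apply hf hs, Measure.map_apply hg hs]
  calc μ (f ⁻¹' s) ≤ μ (g ⁻¹' s ∪ {a | f a ≠ g a}) := by
        refine measure_mono fun a ha ↦ ?_
        by_cases hfg : f a = g a
        · exact Or.inl (by rwa [Set.mem_preimage, ← hfg])
        · exact Or.inr hfg
    _ ≤ μ (g ⁻¹' s) + ε := (measure_union_le _ _).trans (by gcongr)

theorem prod_right (μ : Measure α) [IsProbabilityMeasure μ] [SFinite μ'] [SFinite ν']
    (h : IsTVClose μ' ν' ε) : IsTVClose (μ.prod μ') (μ.prod ν') ε := by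
  intro s hs
  rw [Measure.prod_apply hs, Measure.prod_apply hs]
  calc ∫⁻ a, μ' (Prod.mk a ⁻¹' s) ∂μ
      ≤ ∫⁻ a, (ν' (Prod.mk a ⁻¹' s) + ε) ∂μ :=
        lintegral_mono fun a ↦ h _ (measurable_prodMk_left hs)
    _ = ∫⁻ a, ν' (Prod.mk a ⁻¹' s) ∂μ + ε := by
        rw [lintegral_add_right _ measurable_const, lintegral_const, measure_univ, mul_one]

theorem prod_left (μ' : Measure β) [IsProbabilityMeasure μ'] [SFinite μ] [SFinite ν]
    (h : IsTVClose μ ν ε) : IsTVClose (μ.prod μ') (ν.prod μ') ε := by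
  simpa only [Measure.prod_swap] using (h.prod_right μ').map measurable_swap

theorem prod [IsProbabilityMeasure μ'] [IsProbabilityMeasure ν] [SFinite μ] [SFinite ν']
    (h : IsTVClose μ ν ε) (h' : IsTVClose μ' ν' δ) :
    IsTVClose (μ.prod μ') (ν.prod ν') (ε + δ) :=
  (h.prod_left μ').trans (h'.prod_right ν)

theorem conv {M : Type*} [AddMonoid M] [MeasurableSpace M] [MeasurableAdd₂ M]
    {μ ν μ' ν' : Measure M} [IsProbabilityMeasure μ'] [IsProbabilityMeasure ν] [SFinite μ]
    [SFinite ν'] (h : IsTVClose μ ν ε) (h' : IsTVClose μ' ν' δ) :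
    IsTVClose (μ.conv μ') (ν.conv ν') (ε + δ) :=
  (h.prod h').map measurable_add

theorem abs_measureReal_sub_le [IsProbabilityMeasure μ] [IsProbabilityMeasure ν]
    (h : IsTVClose μ ν ε) (hε : ε ≠ ∞) {s : Set α} (hs : MeasurableSet s) :
    |μ.real s - ν.real s| ≤ ε.toReal := by
  have real_le {μ ν : Measure α} [IsProbabilityMeasure ν] (h : IsTVClose μ ν ε) :
      μ.real s ≤ ν.real s + ε.toReal := by
    rw [measureReal_def, measureReal_def, ← ENNReal.toReal_add (measure_ne_top ν s) hε]
    exact ENNReal.toReal_mono (by finiteness) (h s hs)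
  rw [abs_sub_le_iff]
  constructor <;> linarith [real_le h, real_le h.symm]

end IsTVClose

end TotalVariation

section PoissonApproximation

open ProbabilityTheory unitInterval
open scoped NNReal ENNReal

theorem isTVClose_bernoulli_poisson (p : I) :
    IsTVClose Ber((1 : ℕ), 0, p) (poissonMeasure (toNNReal p)) (toNNReal p ^ 2 : ℝ≥0) := by
  classical
  have one_sub_le_exp : (1 - p : ℝ) ≤ Real.exp (-p) := Real.one_sub_le_exp_neg p
  have atom_zero : (1 - p : ℝ) ≤ (poissonMeasure (toNNReal p)).real {0} := by
    simpa [poissonMeasure_real_singleton] using one_sub_le_exp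
  have atom_one : (p : ℝ) ≤ (poissonMeasure (toNNReal p)).real {1} + p ^ 2 := by
    simp only [poissonMeasure_real_singleton, coe_toNNReal, pow_one, Nat.factorial_one,
      Nat.cast_one, div_one]
    nlinarith [p.2.1]
  have atoms : (poissonMeasure (toNNReal p)).real {0, 1} =
      (poissonMeasure (toNNReal p)).real {0} + (poissonMeasure (toNNReal p)).real {1} :=
    measureReal_union (s₁ := {0}) (s₂ := {1}) (by simp) (by measurability)
  intro s hs
  have atoms_le {u : Set ℕ} (hu : u ⊆ s) :
      (poissonMeasure (toNNReal p)).real u ≤ (poissonMeasure (toNNReal p)).real s :=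
    measureReal_mono hu
  rw [← ENNReal.toReal_le_toReal (by finiteness) (by finiteness),
    ENNReal.toReal_add (by finiteness) (by finiteness)]
  simp only [← measureReal_def, ENNReal.coe_toReal, NNReal.coe_pow, coe_toNNReal]
  rw [bernoulliMeasure_real_apply p hs, coe_toNNReal, coe_toNNReal, coe_symm_eq]
  split_ifs with h1 h0 h0
  · linarith [atoms_le (Set.insert_subset h0 (Set.singleton_subset_iff.2 h1))]
  · linarith [atoms_le (Set.singleton_subset_iff.2 h1)]
  · nlinarith [atoms_le (Set.singleton_subset_iff.2 h0)]
  · positivity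

theorem poissonMeasure_zero : poissonMeasure 0 = Measure.dirac 0 := by
  refine Measure.ext_of_singleton fun n ↦ ?_
  rcases eq_or_ne n 0 with rfl | hn
  · simp [poissonMeasure_singleton]
  · simp [poissonMeasure_singleton, hn, hn.symm]

variable {ι Ω : Type*} [MeasurableSpace Ω] {μ : Measure Ω}

theorem indepFun_sum_sum_of_disjoint {M : Type*} [AddCommMonoid M] [MeasurableSpace M]
    [MeasurableAdd₂ M] {X : ι → Ω → M} (hX : ∀ i, Measurable (X i)) (hindep : iIndepFun X μ)
    {s t : Finset ι} (hst : Disjoint s t) : IndepFun (∑ i ∈ s, X i) (∑ i ∈ t, X i) μ := by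
  have := (hindep.indepFun_finset s t hst hX).comp
    (φ := fun x ↦ ∑ i, x i) (ψ := fun x ↦ ∑ i, x i) (by fun_prop) (by fun_prop)
  convert this using 1 <;> ext ω <;>
    simp only [Finset.sum_apply, Function.comp_apply, Finset.sum_coe_sort _ fun i ↦ X i ω]

variable {X : ι → Ω → ℕ} {p : ι → I}

theorem measure_sum_ne_sum_sdiff_le (hX : ∀ i, Measurable (X i))
    (hlaw : ∀ i, μ.map (X i) = Ber(1, 0, p i)) [DecidableEq ι] (s t : Finset ι) :
    μ {ω | (∑ i ∈ t, X i) ω ≠ (∑ i ∈ t \ s, X i) ω} ≤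
      (∑ i ∈ s ∩ t, toNNReal (p i) : ℝ≥0) := by
  have measure_ne_zero (i : ι) : μ {ω | X i ω ≠ 0} = toNNReal (p i) := by
    have : {ω | X i ω ≠ 0} = X i ⁻¹' {0}ᶜ := rfl
    rw [this, ← Measure.map_apply (hX i) (by measurability), hlaw]
    simp
  calc μ {ω | (∑ i ∈ t, X i) ω ≠ (∑ i ∈ t \ s, X i) ω}
      ≤ μ (⋃ i ∈ s ∩ t, {ω | X i ω ≠ 0}) := by
        refine measure_mono fun ω hω ↦ ?_
        contrapose! hω
        simp only [Set.mem_iUnion, not_exists] at hω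
        simp only [Set.mem_ofPred_eq, not_not, Finset.sum_apply]
        refine (Finset.sum_subset Finset.sdiff_subset fun i hi hit ↦ ?_).symm
        have := hω i
        grind
    _ ≤ ∑ i ∈ s ∩ t, μ {ω | X i ω ≠ 0} := measure_biUnion_finset_le _ _
    _ = (∑ i ∈ s ∩ t, toNNReal (p i) : ℝ≥0) := by simp [measure_ne_zero]

variable [IsProbabilityMeasure μ]

theorem isTVClose_map_sum_poisson (hX : ∀ i, Measurable (X i))
    (hlaw : ∀ i, μ.map (X i) = Ber(1, 0, p i)) (hindep : iIndepFun X μ) (s : Finset ι) :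
    IsTVClose (μ.map (∑ i ∈ s, X i)) (poissonMeasure (∑ i ∈ s, toNNReal (p i)))
      (∑ i ∈ s, toNNReal (p i) ^ 2 : ℝ≥0) := by
  classical
  induction s using Finset.induction_on with
  | empty =>
    simp only [Finset.sum_empty, ENNReal.coe_zero]
    rw [poissonMeasure_zero]
    intro t _
    simp [Pi.zero_def, Measure.map_const]
  | insert i s hi ih =>
    have hsum : Measurable (∑ j ∈ s, X j) := by fun_prop
    have := Measure.isProbabilityMeasure_map (μ := μ) hsum.aemeasurable
    rw [Finset.sum_insert hi, Finset.sum_insert hi, Finset.sum_insert hi, ENNReal.coe_add,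
      (hindep.indepFun_finsetSum_of_notMem hX hi).symm.map_add_eq_map_conv_map (hX i) hsum,
      ← poissonMeasure_conv_poissonMeasure, hlaw]
    exact (isTVClose_bernoulli_poisson (p i)).conv ih

theorem isTVClose_map_prodMk_sum_poisson (hX : ∀ i, Measurable (X i))
    (hlaw : ∀ i, μ.map (X i) = Ber(1, 0, p i)) (hindep : iIndepFun X μ) [DecidableEq ι]
    (s t : Finset ι) :
    IsTVClose (μ.map fun ω ↦ ((∑ i ∈ s, X i) ω, (∑ i ∈ t, X i) ω))
      ((poissonMeasure (∑ i ∈ s, toNNReal (p i))).prod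
        (poissonMeasure (∑ i ∈ t, toNNReal (p i))))
      (∑ i ∈ s, toNNReal (p i) ^ 2 + ∑ i ∈ t, toNNReal (p i) ^ 2 +
        2 * ∑ i ∈ s ∩ t, toNNReal (p i) : ℝ≥0) := by
  have measurable_sum (u : Finset ι) : Measurable (∑ i ∈ u, X i) := by fun_prop
  have := fun u : Finset ι ↦
    Measure.isProbabilityMeasure_map (μ := μ) (measurable_sum u).aemeasurable
  have diff_ne := measure_sum_ne_sum_sdiff_le hX hlaw s t
  have decouple : IsTVClose (μ.map fun ω ↦ ((∑ i ∈ s, X i) ω, (∑ i ∈ t, X i) ω))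
      (μ.map fun ω ↦ ((∑ i ∈ s, X i) ω, (∑ i ∈ t \ s, X i) ω))
      (∑ i ∈ s ∩ t, toNNReal (p i) : ℝ≥0) := by
    refine .map_of_measure_ne_le (by fun_prop) (by fun_prop) ?_
    simpa using diff_ne
  have recouple : IsTVClose (μ.map (∑ i ∈ t \ s, X i)) (μ.map (∑ i ∈ t, X i))
      (∑ i ∈ s ∩ t, toNNReal (p i) : ℝ≥0) :=
    .map_of_measure_ne_le (measurable_sum _) (measurable_sum _)
      (by simpa only [ne_comm] using diff_ne)
  have indep : IndepFun (∑ i ∈ s, X i) (∑ i ∈ t \ s, X i) μ :=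
    indepFun_sum_sum_of_disjoint hX hindep Finset.disjoint_sdiff
  rw [(indepFun_iff_map_prod_eq_prod_map_map (by fun_prop) (by fun_prop)).1 indep] at decouple
  convert (decouple.trans (recouple.prod_right _)).trans
    ((isTVClose_map_sum_poisson hX hlaw hindep s).prod
      (isTVClose_map_sum_poisson hX hlaw hindep t)) using 1
  push_cast
  ring

end PoissonApproximation

section BoundedDifferences

open ProbabilityTheory unitInterval

/-- Changing the `i`-th argument of `f` changes its value by at most `c i`. -/
def HasBoundedDifferences {ι α : Type*} (f : (ι → α) → ℝ) (c : ι → ℝ) : Prop :=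
  ∀ i ω ω', Set.EqOn ω ω' {i}ᶜ → |f ω - f ω'| ≤ c i

theorem one_add_mul_exp_sub_one_le_exp {p x : ℝ} (hp : 0 ≤ p) (hx : |x| ≤ 1) :
    1 + p * (Real.exp x - 1) ≤ Real.exp (p * (x + x ^ 2)) := by
  have taylor : Real.exp x - 1 ≤ x + x ^ 2 := by
    linarith [le_of_abs_le (Real.abs_exp_sub_one_sub_id_le hx)]
  calc 1 + p * (Real.exp x - 1) ≤ p * (x + x ^ 2) + 1 := by
        rw [add_comm]
        gcongr
    _ ≤ Real.exp (p * (x + x ^ 2)) := Real.add_one_le_exp _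

theorem mgf_bernoulli_le {α : Type*} [MeasurableSpace α] [MeasurableSingletonClass α] (a b : α)
    (p : I) {g : α → ℝ} {c l : ℝ} (hg : |g a - g b| ≤ c) (hl : |l| * c ≤ 1) :
    mgf g Ber(a, b, p) l ≤ Real.exp (l * ∫ z, g z ∂Ber(a, b, p) + p * (l * c) ^ 2) := by
  have p_nonneg : (0 : ℝ) ≤ p := p.2.1
  set x := l * (g a - g b) with x_def
  have abs_x_le : |x| ≤ |l| * c := by
    rw [abs_mul]
    gcongr
  have sq_x_le : x ^ 2 ≤ (l * c) ^ 2 := by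
    rw [← sq_abs x, mul_pow, ← sq_abs l, ← mul_pow]
    gcongr
  have factor : Real.exp (l * g a) = Real.exp (l * g b) * Real.exp x := by
    rw [← Real.exp_add, x_def]
    ring_nf
  simp only [mgf, integral_bernoulliMeasure, smul_eq_mul]
  calc p * Real.exp (l * g a) + (1 - p) * Real.exp (l * g b)
      = Real.exp (l * g b) * (1 + p * (Real.exp x - 1)) := by
        rw [factor]
        ring
    _ ≤ Real.exp (l * g b) * Real.exp (p * (x + x ^ 2)) := by
        gcongr
        exact one_add_mul_exp_sub_one_le_exp p_nonneg (abs_x_le.trans hl)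
    _ = Real.exp (l * (p * g a + (1 - p) * g b) + p * x ^ 2) := by
        rw [← Real.exp_add, x_def]
        ring_nf
    _ ≤ Real.exp (l * (p * g a + (1 - p) * g b) + p * (l * c) ^ 2) := by gcongr

theorem integral_pi_option {ι : Type*} [Fintype ι] {α : Option ι → Type*}
    [∀ i, MeasurableSpace (α i)] (μ : ∀ i, Measure (α i)) [∀ i, SigmaFinite (μ i)]
    {E : Type*} [NormedAddCommGroup E] [NormedSpace ℝ E] {f : (∀ i, α i) → E}
    (hf : Integrable f (Measure.pi μ)) :
    ∫ ω, f ω ∂Measure.pi μ = ∫ ω, ∫ a, f ((MeasurableEquiv.piOptionEquivProd α).symm (ω, a))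
      ∂μ none ∂Measure.pi fun i ↦ μ (some i) := by
  have preserving : MeasurePreserving (MeasurableEquiv.piOptionEquivProd α).symm
      ((Measure.pi fun i ↦ μ (some i)).prod (μ none)) (Measure.pi μ) :=
    ⟨MeasurableEquiv.measurable _, Measure.pi_map_piOptionEquivProd μ⟩
  rw [← preserving.integral_comp', integral_prod]
  exact (preserving.integrable_comp_emb (MeasurableEquiv.measurableEmbedding _)).2 hf

namespace HasBoundedDifferences

theorem integral_none {ι α : Type*} [MeasurableSpace α] [Finite α] [MeasurableSingletonClass α]
    {f : (Option ι → α) → ℝ} {c : Option ι → ℝ}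
    (hf : HasBoundedDifferences f c) (μ : Measure α) [IsProbabilityMeasure μ] :
    HasBoundedDifferences
      (fun ω ↦ ∫ a, f ((MeasurableEquiv.piOptionEquivProd fun _ ↦ α).symm (ω, a)) ∂μ)
      fun i ↦ c (some i) := by
  intro i ω ω' h
  have pointwise (a : α) : ‖f ((MeasurableEquiv.piOptionEquivProd fun _ ↦ α).symm (ω, a)) -
      f ((MeasurableEquiv.piOptionEquivProd fun _ ↦ α).symm (ω', a))‖ ≤ c (some i) := by
    refine hf (some i) _ _ fun j hj ↦ ?_
    rcases j with _ | j
    · rfl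
    · exact h fun hji ↦ hj (congrArg some hji)
  rw [← integral_sub .of_finite .of_finite]
  simpa using norm_integral_le_of_norm_le_const (μ := μ) (.of_forall pointwise)

theorem mgf_pi_option_le {ι : Type*} [Fintype ι] (p : Option ι → I) {f : (Option ι → Bool) → ℝ}
    {c : Option ι → ℝ} {l : ℝ} (hf : HasBoundedDifferences f c) (hl : |l| * c none ≤ 1) :
    mgf f (Measure.pi fun i ↦ Ber(true, false, p i)) l ≤
      mgf (fun ω ↦ ∫ a, f ((MeasurableEquiv.piOptionEquivProd fun _ ↦ Bool).symm (ω, a))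
          ∂Ber(true, false, p none)) (Measure.pi fun i ↦ Ber(true, false, p (some i))) l *
        Real.exp (p none * (l * c none) ^ 2) := by
  set e := MeasurableEquiv.piOptionEquivProd fun _ : Option ι ↦ Bool
  set μ := Measure.pi fun i ↦ Ber(true, false, p (some i))
  set F := fun ω ↦ ∫ a, f (e.symm (ω, a)) ∂Ber(true, false, p none)
  calc mgf f (Measure.pi fun i ↦ Ber(true, false, p i)) l
      = ∫ ω, mgf (fun a ↦ f (e.symm (ω, a))) Ber(true, false, p none) l ∂μ :=
        integral_pi_option _ .of_finite
    _ ≤ ∫ ω, Real.exp (l * F ω + p none * (l * c none) ^ 2) ∂μ := by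
        refine integral_mono .of_finite .of_finite fun ω ↦
          mgf_bernoulli_le _ _ _ (hf none _ _ fun i hi ↦ ?_) hl
        obtain ⟨i, rfl⟩ := Option.ne_none_iff_exists'.1 hi
        rfl
    _ = mgf F μ l * Real.exp (p none * (l * c none) ^ 2) := by
        simp only [Real.exp_add, integral_mul_const, mgf]

theorem mgf_le {ι : Type*} [Fintype ι] (p : ι → I) {f : (ι → Bool) → ℝ} {c : ι → ℝ} {l : ℝ}
    (hf : HasBoundedDifferences f c) (hl : ∀ i, |l| * c i ≤ 1) :
    mgf f (Measure.pi fun i ↦ Ber(true, false, p i)) l ≤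
      Real.exp (l * ∫ ω, f ω ∂(Measure.pi fun i ↦ Ber(true, false, p i)) +
        ∑ i, p i * (l * c i) ^ 2) := by
  refine Fintype.induction_empty_option (P := fun ι _ ↦ ∀ (p : ι → I) {f : (ι → Bool) → ℝ}
    {c : ι → ℝ}, HasBoundedDifferences f c → (∀ i, |l| * c i ≤ 1) →
    mgf f (Measure.pi fun i ↦ Ber(true, false, p i)) l ≤
      Real.exp (l * ∫ ω, f ω ∂(Measure.pi fun i ↦ Ber(true, false, p i)) +
        ∑ i, p i * (l * c i) ^ 2)) ?of_equiv ?empty ?option ι p hf hl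
  case of_equiv =>
    intro ι κ _ e ih p f c hf hl
    let _ := Fintype.ofEquiv κ e.symm
    have preserving := measurePreserving_piCongrLeft (fun i ↦ Ber(true, false, p i)) e
    have hf' : HasBoundedDifferences (f ∘ MeasurableEquiv.piCongrLeft (fun _ ↦ Bool) e)
        (c ∘ e) := by
      intro i ω ω' h
      refine hf (e i) _ _ fun j hj ↦ ?_
      obtain ⟨j, rfl⟩ := e.surjective j
      simp only [MeasurableEquiv.piCongrLeft_apply_apply]
      exact h fun hji ↦ hj (congrArg e hji)
    have := ih (p ∘ e) hf' fun i ↦ hl (e i)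
    simp only [mgf, Function.comp_apply, Equiv.sum_comp e fun i ↦ p i * (l * c i) ^ 2] at this
    rw [mgf, ← preserving.integral_comp', ← preserving.integral_comp']
    exact this
  case empty =>
    intros
    simp [mgf, Measure.pi_of_empty (fun _ ↦ Ber(true, false, _)) isEmptyElim]
  case option =>
    intro ι _ ih p f c hf hl
    grw [hf.mgf_pi_option_le p (hl none), ih _ (hf.integral_none _) fun i ↦ hl (some i)]
    rw [← Real.exp_add, integral_pi_option _ .of_finite, Fintype.sum_option]
    exact le_of_eq (by ring_nf)

theorem measureReal_abs_sub_integral_ge_le {ι : Type*} [Fintype ι] (p : ι → I)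
    {f : (ι → Bool) → ℝ} {c : ι → ℝ} {l : ℝ}
    (hf : HasBoundedDifferences f c) (hl₀ : 0 ≤ l) (hl : ∀ i, l * c i ≤ 1) (t : ℝ) :
    (Measure.pi fun i ↦ Ber(true, false, p i)).real
        {ω | t ≤ |f ω - ∫ ω', f ω' ∂(Measure.pi fun i ↦ Ber(true, false, p i))|} ≤
      2 * Real.exp (∑ i, p i * (l * c i) ^ 2 - l * t) := by
  set μ := Measure.pi fun i ↦ Ber(true, false, p i)
  set m := ∫ ω, f ω ∂μ
  have mgf_le {s : ℝ} (hs : |s| = l) :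
      mgf f μ s ≤ Real.exp (s * m + ∑ i, p i * (l * c i) ^ 2) := by
    simpa only [mul_pow, ← hs, sq_abs] using hf.mgf_le p (by simpa only [hs] using hl)
  have upper : μ.real {ω | m + t ≤ f ω} ≤ Real.exp (∑ i, p i * (l * c i) ^ 2 - l * t) := by
    grw [measure_ge_le_exp_mul_mgf _ hl₀ .of_finite, mgf_le (abs_of_nonneg hl₀), ← Real.exp_add]
    exact le_of_eq (by ring_nf)
  have lower : μ.real {ω | f ω ≤ m - t} ≤ Real.exp (∑ i, p i * (l * c i) ^ 2 - l * t) := by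
    grw [measure_le_le_exp_mul_mgf _ (neg_nonpos.2 hl₀) .of_finite,
      mgf_le ((abs_neg l).trans (abs_of_nonneg hl₀)), ← Real.exp_add]
    exact le_of_eq (by ring_nf)
  calc μ.real {ω | t ≤ |f ω - m|} ≤ μ.real ({ω | m + t ≤ f ω} ∪ {ω | f ω ≤ m - t}) := by
        refine measureReal_mono fun ω hω ↦ ?_
        rcases le_abs.1 hω.out with h | h
        · exact Or.inl (by linarith : m + t ≤ f ω)
        · exact Or.inr (by linarith : f ω ≤ m - t)
    _ ≤ 2 * Real.exp (∑ i, p i * (l * c i) ^ 2 - l * t) := by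
        linarith [measureReal_union_le (μ := μ) {ω | m + t ≤ f ω} {ω | f ω ≤ m - t}]

end HasBoundedDifferences

end BoundedDifferences

section RandomDigraph

open ProbabilityTheory unitInterval Finset
open scoped NNReal

theorem abs_card_filter_sub_card_filter_le {α : Type*} [Fintype α] {P Q : α → Prop}
    [DecidablePred P] [DecidablePred Q] {D : Finset α} (h : ∀ a ∉ D, (P a ↔ Q a)) :
    |(#{a | P a} : ℝ) - #{a | Q a}| ≤ #D := by
  classical
  have card_le {P Q : α → Prop} [DecidablePred P] [DecidablePred Q]
      (h : ∀ a ∉ D, (P a → Q a)) : (#{a | P a} : ℝ) ≤ #{a | Q a} + #D := by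
    have : ({a | P a} : Finset α) ⊆ ({a | Q a} : Finset α) ∪ D := by grind
    exact_mod_cast (card_le_card this).trans (card_union_le _ _)
  rw [abs_sub_le_iff]
  constructor <;> linarith [card_le fun a ha ↦ (h a ha).1, card_le fun a ha ↦ (h a ha).2]

variable {V : Type*} [Fintype V]

/-- The out-degree of `v` in the digraph on `V` with edge indicators `ω`; loops are allowed. -/
def outDegree (ω : V × V → Bool) (v : V) : ℕ := #{w | ω (v, w)}

/-- The in-degree of `v` in the digraph on `V` with edge indicators `ω`. -/
def inDegree (ω : V × V → Bool) (v : V) : ℕ := #{w | ω (w, v)}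

/-- The number of vertices with out-degree `x` and in-degree `y`. -/
def degreeCount (x y : ℕ) (ω : V × V → Bool) : ℕ := #{v | outDegree ω v = x ∧ inDegree ω v = y}

variable (V) in
/-- The law of the edge indicators of the random digraph on `V` in which each of the `|V|²`
possible edges, loops included, is present independently with probability `p`. -/
noncomputable abbrev randomDigraph (p : I) : Measure (V × V → Bool) :=
  Measure.pi fun _ ↦ Ber(true, false, p)

theorem hasBoundedDifferences_degreeCount (x y : ℕ) :
    HasBoundedDifferences (fun ω : V × V → Bool ↦ (degreeCount x y ω : ℝ)) fun _ ↦ 2 := by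
  classical
  intro e ω ω' h
  have outDegree_congr {v : V} (hv : v ≠ e.1) : outDegree ω v = outDegree ω' v := by
    simp only [outDegree, h fun he : (v, _) = e ↦ hv (congrArg Prod.fst he)]
  have inDegree_congr {v : V} (hv : v ≠ e.2) : inDegree ω v = inDegree ω' v := by
    simp only [inDegree, h fun he : (_, v) = e ↦ hv (congrArg Prod.snd he)]
  refine (abs_card_filter_sub_card_filter_le (D := {e.1, e.2}) fun v hv ↦ ?_).trans
    (Nat.cast_le_ofNat.2 card_le_two)
  rw [outDegree_congr (by grind), inDegree_congr (by grind)]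

theorem outDegree_eq_sum (ω : V × V → Bool) (v : V) :
    outDegree ω v = ∑ e ∈ {v} ×ˢ univ, (ω e).toNat := by
  simp only [outDegree, card_filter, sum_product, sum_singleton, Bool.toNat, Bool.cond_eq_ite]

theorem inDegree_eq_sum (ω : V × V → Bool) (v : V) :
    inDegree ω v = ∑ e ∈ univ ×ˢ {v}, (ω e).toNat := by
  simp only [inDegree, card_filter, sum_product, sum_singleton, Bool.toNat, Bool.cond_eq_ite]

theorem isTVClose_map_degrees (p : I) (v : V) :
    IsTVClose ((randomDigraph V p).map fun ω ↦ (outDegree ω v, inDegree ω v))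
      ((poissonMeasure (Fintype.card V * toNNReal p)).prod
        (poissonMeasure (Fintype.card V * toNNReal p)))
      (2 * Fintype.card V * toNNReal p ^ 2 + 2 * toNNReal p : ℝ≥0) := by
  classical
  have law (e : V × V) :
      (randomDigraph V p).map (fun ω ↦ (ω e).toNat) = Ber((1 : ℕ), 0, p) := by
    refine (Measure.map_map (g := Bool.toNat) .of_discrete (measurable_pi_apply e)).symm.trans ?_
    rw [(measurePreserving_eval _ e : MeasurePreserving (Function.eval e) _ _).map_eq]
    exact map_bernoulliMeasure ..
  have indep : iIndepFun (fun (e : V × V) (ω : V × V → Bool) ↦ (ω e).toNat)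
      (randomDigraph V p) :=
    iIndepFun_pi (X := fun _ ↦ Bool.toNat) (by fun_prop)
  have common : ({v} ×ˢ univ ∩ univ ×ˢ {v} : Finset (V × V)) = {(v, v)} := by
    rw [product_inter_product, inter_univ, univ_inter, singleton_product_singleton]
  convert isTVClose_map_prodMk_sum_poisson (p := fun _ ↦ p) (fun _ ↦ .of_discrete) law indep
    ({v} ×ˢ univ) (univ ×ˢ {v}) using 2
  · ext ω <;> simp [outDegree_eq_sum, inDegree_eq_sum]
  · simp
  · simp
  · simp only [common, sum_const, card_product, card_singleton, card_univ, nsmul_eq_mul]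
    push_cast
    ring

theorem abs_integral_degreeCount_sub_le (p : I) (x y : ℕ) :
    |∫ ω, (degreeCount x y ω : ℝ) ∂randomDigraph V p -
        (poissonMeasure (Fintype.card V * toNNReal p)).real {x} *
          (poissonMeasure (Fintype.card V * toNNReal p)).real {y} * Fintype.card V| ≤
      2 * (Fintype.card V * p) ^ 2 + 2 * (Fintype.card V * p) := by
  set q : ℝ := (poissonMeasure (Fintype.card V * toNNReal p)).real {x} *
    (poissonMeasure (Fintype.card V * toNNReal p)).real {y}
  set μ := randomDigraph V p
  have integral_eq : ∫ ω, (degreeCount x y ω : ℝ) ∂μ =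
      ∑ v, μ.real {ω | outDegree ω v = x ∧ inDegree ω v = y} := by
    simp only [degreeCount, card_filter, Nat.cast_sum]
    rw [integral_finsetSum _ fun _ _ ↦ .of_finite]
    refine sum_congr rfl fun v _ ↦ ?_
    rw [← integral_indicator_one (.of_discrete)]
    congr with ω
    simp [Set.indicator_apply]
  have vertex (v : V) : |μ.real {ω | outDegree ω v = x ∧ inDegree ω v = y} - q| ≤
      2 * Fintype.card V * p ^ 2 + 2 * p := by
    have := Measure.isProbabilityMeasure_map (μ := μ)
      (f := fun ω ↦ (outDegree ω v, inDegree ω v)) (Measurable.of_discrete.aemeasurable)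
    have pair := (isTVClose_map_degrees p v).abs_measureReal_sub_le ENNReal.coe_ne_top
      (measurableSet_singleton (x, y))
    rw [map_measureReal_apply .of_discrete (measurableSet_singleton _),
      ← Set.singleton_prod_singleton, measureReal_prod_prod,
      ENNReal.coe_toReal] at pair
    simpa [Set.preimage, Set.mem_prod] using pair
  calc |∫ ω, (degreeCount x y ω : ℝ) ∂μ - q * Fintype.card V|
      = |∑ v, (μ.real {ω | outDegree ω v = x ∧ inDegree ω v = y} - q)| := by
        rw [integral_eq, sum_sub_distrib]
        simp [mul_comm]
    _ ≤ ∑ _v : V, (2 * Fintype.card V * p ^ 2 + 2 * p : ℝ) :=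
        (abs_sum_le_sum_abs _ _).trans (sum_le_sum fun v _ ↦ vertex v)
    _ = 2 * (Fintype.card V * p) ^ 2 + 2 * (Fintype.card V * p) := by
        rw [sum_const, card_univ, nsmul_eq_mul]
        ring

theorem degreeCount_eq_zero {x y : ℕ} (h : Fintype.card V < x ∨ Fintype.card V < y)
    (ω : V × V → Bool) : degreeCount x y ω = 0 := by
  have outDegree_le (v : V) : outDegree ω v ≤ Fintype.card V := card_le_univ _
  have inDegree_le (v : V) : inDegree ω v ≤ Fintype.card V := card_le_univ _
  simp only [degreeCount, card_eq_zero, filter_eq_empty_iff]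
  grind

theorem measureReal_exists_degreeCount_sub_integral_ge_le (p : I) {l t : ℝ} (hl₀ : 0 ≤ l)
    (hl : l * 2 ≤ 1) (ht : 0 < t) :
    (randomDigraph V p).real {ω | ∃ x y : ℕ,
        t ≤ |(degreeCount x y ω : ℝ) - ∫ ω', (degreeCount x y ω' : ℝ) ∂randomDigraph V p|} ≤
      (Fintype.card V + 1) ^ 2 *
        (2 * Real.exp (Fintype.card V ^ 2 * p * (l * 2) ^ 2 - l * t)) := by
  set μ := randomDigraph V p
  set S := range (Fintype.card V + 1)
  set far : ℕ × ℕ → Set (V × V → Bool) := fun z ↦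
    {ω | t ≤ |(degreeCount z.1 z.2 ω : ℝ) - ∫ ω', (degreeCount z.1 z.2 ω' : ℝ) ∂μ|}
  have far_le (z : ℕ × ℕ) :
      μ.real (far z) ≤ 2 * Real.exp (Fintype.card V ^ 2 * p * (l * 2) ^ 2 - l * t) := by
    convert (hasBoundedDifferences_degreeCount z.1 z.2).measureReal_abs_sub_integral_ge_le
      (fun _ ↦ p) hl₀ (fun _ ↦ hl) t using 4
    simp [sq, mul_assoc]
  calc μ.real {ω | ∃ x y, ω ∈ far (x, y)} ≤ μ.real (⋃ z ∈ S ×ˢ S, far z) := by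
        refine measureReal_mono (fun ω ⟨x, y, hω⟩ ↦ ?_) (measure_ne_top _ _)
        suffices x ≤ Fintype.card V ∧ y ≤ Fintype.card V from
          Set.mem_biUnion (x := (x, y)) (by simpa [S, Nat.lt_succ_iff] using this) hω
        contrapose! hω
        have hxy : Fintype.card V < x ∨ Fintype.card V < y := by grind
        simpa [far, degreeCount_eq_zero hxy] using ht
    _ ≤ ∑ z ∈ S ×ˢ S, μ.real (far z) := measureReal_biUnion_finset_le _ _
    _ ≤ ∑ z ∈ S ×ˢ S, 2 * Real.exp (Fintype.card V ^ 2 * p * (l * 2) ^ 2 - l * t) :=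
        sum_le_sum fun z _ ↦ far_le z
    _ = _ := by simp [S, sq]

theorem measureReal_exists_degreeCount_sub_poisson_gt_le (p : I) {l t : ℝ} (hl₀ : 0 ≤ l)
    (hl : l * 2 ≤ 1) (ht : 0 < t) :
    (randomDigraph V p).real {ω | ∃ x y : ℕ,
        t + (2 * (Fintype.card V * p) ^ 2 + 2 * (Fintype.card V * p)) <
          |(degreeCount x y ω : ℝ) - (poissonMeasure (Fintype.card V * toNNReal p)).real {x} *
            (poissonMeasure (Fintype.card V * toNNReal p)).real {y} * Fintype.card V|} ≤
      (Fintype.card V + 1) ^ 2 *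
        (2 * Real.exp (Fintype.card V ^ 2 * p * (l * 2) ^ 2 - l * t)) := by
  refine (measureReal_mono ?_).trans
    (measureReal_exists_degreeCount_sub_integral_ge_le p hl₀ hl ht)
  rintro ω ⟨x, y, hω⟩
  refine ⟨x, y, ?_⟩
  have := hω.trans_le (abs_sub_le _ (∫ ω', (degreeCount x y ω' : ℝ) ∂randomDigraph V p) _)
  linarith [abs_integral_degreeCount_sub_le (V := V) p x y]

end RandomDigraph

section Asymptotics

open ProbabilityTheory unitInterval Filter Topology

theorem eventually_sq_mul_exp_sub_rpow_le (a K : ℝ) {δ : ℝ} (hδ : 0 < δ) :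
    ∀ᶠ x : ℝ in atTop, (x + 1) ^ 2 * (2 * Real.exp (a - x ^ δ / 2)) ≤ x ^ (-K) := by
  have decay : Tendsto (fun x : ℝ ↦ (x ^ δ) ^ ((K + 2) / δ) * Real.exp (-(1 / 2) * x ^ δ))
      atTop (𝓝 0) :=
    (tendsto_rpow_mul_exp_neg_mul_atTop_nhds_zero _ _ one_half_pos).comp (tendsto_rpow_atTop hδ)
  filter_upwards [decay.eventually_le_const (by positivity : 0 < 1 / (8 * Real.exp a)),
    eventually_ge_atTop 1] with x hx one_le_x
  have x_pos : 0 < x := by linarith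
  rw [← Real.rpow_mul x_pos.le, mul_div_cancel₀ _ hδ.ne', Real.rpow_add x_pos, Real.rpow_two,
    le_div_iff₀ (by positivity)] at hx
  rw [Real.rpow_neg x_pos.le, ← one_div, le_div_iff₀ (by positivity)]
  calc (x + 1) ^ 2 * (2 * Real.exp (a - x ^ δ / 2)) * x ^ K
      ≤ (2 * x) ^ 2 * (2 * Real.exp (a - x ^ δ / 2)) * x ^ K := by gcongr; linarith
    _ = x ^ K * x ^ 2 * Real.exp (-(1 / 2) * x ^ δ) * (8 * Real.exp a) := by
        rw [sub_eq_add_neg, Real.exp_add]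
        ring_nf
    _ ≤ 1 := hx

theorem eventually_measureReal_exists_degreeCount_sub_poisson_gt_le (d K : ℝ) {γ : ℝ}
    (hγ : 1 / 2 < γ) :
    ∀ᶠ n : ℕ in atTop, ∀ p : I, n * (p : ℝ) = d →
      (randomDigraph (Fin n) p).real {ω | ∃ x y : ℕ, (n : ℝ) ^ γ <
        |(degreeCount x y ω : ℝ) - (poissonMeasure (n * toNNReal p)).real {x} *
          (poissonMeasure (n * toNNReal p)).real {y} * n|} ≤ (n : ℝ) ^ (-K) := by
  have cast_atTop := tendsto_natCast_atTop_atTop (R := ℝ)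
  filter_upwards [cast_atTop.eventually_ge_atTop 4,
    cast_atTop.eventually (eventually_sq_mul_exp_sub_rpow_le (4 * d) K (sub_pos.2 hγ)),
    ((tendsto_rpow_atTop (one_half_pos.trans hγ)).comp cast_atTop).eventually_ge_atTop
      (2 * (2 * d ^ 2 + 2 * d))] with n four_le decay bias_le p hp
  have n_pos : (0 : ℝ) < n := by linarith
  -- This `l` keeps the variance term of the exponent bounded: `n ^ 2 * p * (l * 2) ^ 2 = 4 * d`.
  set l : ℝ := (n : ℝ) ^ (-(1 / 2) : ℝ) with l_def
  have l_sq : n * l ^ 2 = 1 := by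
    rw [l_def, ← Real.rpow_natCast, ← Real.rpow_mul n_pos.le]
    norm_num [Real.rpow_neg_one, n_pos.ne']
  have l_mul : l * ((n : ℝ) ^ γ / 2) = (n : ℝ) ^ (γ - 1 / 2) / 2 := by
    rw [l_def, mul_div_assoc', ← Real.rpow_add n_pos]
    ring_nf
  have l_le : l * 2 ≤ 1 := by
    have : (l * 2) ^ 2 ≤ 1 ^ 2 := by nlinarith
    exact le_of_sq_le_sq this zero_le_one
  have exponent : (n : ℝ) ^ 2 * p * (l * 2) ^ 2 - l * ((n : ℝ) ^ γ / 2) =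
      4 * d - (n : ℝ) ^ (γ - 1 / 2) / 2 := by
    linear_combination 4 * n * p * l_sq - l_mul + 4 * hp
  refine le_trans ?_ decay
  have finite_bound := measureReal_exists_degreeCount_sub_poisson_gt_le (V := Fin n) p
    (by positivity : 0 ≤ l) l_le (by positivity : 0 < (n : ℝ) ^ γ / 2)
  simp only [Fintype.card_fin, hp, exponent] at finite_bound
  refine (measureReal_mono ?_).trans finite_bound
  rintro ω ⟨x, y, hω⟩
  refine ⟨x, y, hω.trans_le' ?_⟩
  simp only [Function.comp_apply] at bias_le
  linarith

end Asymptotics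

section AdjacencyMatrix

open ProbabilityTheory unitInterval

/-- The adjacency matrix of the digraph with edge indicators `ω`. -/
def adjacency {V : Type*} (ω : V × V → Bool) (i j : V) : ℝ := if ω (i, j) then 1 else 0

theorem ncard_adjacency_degrees {V : Type*} [Fintype V] (ω : V × V → Bool) (x y : ℕ) :
    {i | {j | adjacency ω i j = 1}.ncard = x ∧ {j | adjacency ω j i = 1}.ncard = y}.ncard =
      degreeCount x y ω := by
  have out_eq (v : V) : {j | adjacency ω v j = 1}.ncard = outDegree ω v := by
    simp [adjacency, outDegree, ← Set.ncard_coe_finset]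
  have in_eq (v : V) : {j | adjacency ω j v = 1}.ncard = inDegree ω v := by
    simp [adjacency, inDegree, ← Set.ncard_coe_finset]
  simp [out_eq, in_eq, degreeCount, ← Set.ncard_coe_finset]

theorem bernoulliR_eq_bernoulliMeasure (p : I) : bernoulliR p = Ber((1 : ℝ), 0, p) := by
  rw [bernoulliR, bernoulliMeasure_def, ← coe_symm_eq, ← coe_toNNReal, ← coe_toNNReal,
    ENNReal.ofReal_coe_nnreal, ENNReal.ofReal_coe_nnreal]
  rfl

theorem pi_map_curry {ι κ X : Type*} [Fintype ι] [Fintype κ] [MeasurableSpace X]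
    (μ : ι → κ → Measure X) [∀ i j, IsProbabilityMeasure (μ i j)] :
    (Measure.pi fun z : ι × κ ↦ μ z.1 z.2).map (MeasurableEquiv.curry ι κ X) =
      Measure.pi fun i ↦ Measure.pi fun j ↦ μ i j := by
  simpa only [Measure.infinitePi_eq_pi] using Measure.infinitePi_map_curry μ

theorem iidMatrixLawR_eq_map_adjacency (n : ℕ) (p : I) :
    iidMatrixLawR n p = (randomDigraph (Fin n) p).map adjacency := by
  have entries : (randomDigraph (Fin n) p).map (fun ω e ↦ if ω e then (1 : ℝ) else 0) =
      Measure.pi fun _ ↦ Ber(1, 0, p) :=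
    (Measure.pi_map_pi (f := fun _ (b : Bool) ↦ if b then (1 : ℝ) else 0) fun _ ↦
      Measurable.of_discrete.aemeasurable).trans (by simp)
  calc iidMatrixLawR n p
      = ((randomDigraph (Fin n) p).map fun ω e ↦ if ω e then (1 : ℝ) else 0).map
          (MeasurableEquiv.curry (Fin n) (Fin n) ℝ) := by
        rw [iidMatrixLawR, bernoulliR_eq_bernoulliMeasure, entries,
          pi_map_curry fun _ _ ↦ Ber((1 : ℝ), 0, p)]
    _ = (randomDigraph (Fin n) p).map adjacency :=
        Measure.map_map (MeasurableEquiv.measurable _) .of_discrete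

theorem ofReal_one_sub_le_measure {Ω : Type*} [MeasurableSpace Ω] {μ : Measure Ω}
    [IsProbabilityMeasure μ] {s : Set Ω} (hs : MeasurableSet s) {ε : ℝ} (h : μ.real sᶜ ≤ ε) :
    ENNReal.ofReal (1 - ε) ≤ μ s := by
  rw [probReal_compl_eq_one_sub hs] at h
  rw [← ofReal_measureReal]
  exact ENNReal.ofReal_le_ofReal (by linarith)

end AdjacencyMatrix

theorem degree_distribution_convergence (d : ℝ) (hd : 0 < d) (K γ : ℝ) (hK : 0 < K)
    (hγ : 1 / 2 < γ) :
    ∃ N : ℕ, ∀ n : ℕ, N ≤ n →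
      ENNReal.ofReal (1 - (n : ℝ) ^ (-K)) ≤
        iidMatrixLawR n (d / n)
          {A | ∀ x y : ℕ,
            |(({i : Fin n | {j : Fin n | A i j = 1}.ncard = x ∧
                  {j : Fin n | A j i = 1}.ncard = y}).ncard : ℝ) -
              (d ^ x * Real.exp (-d) / (Nat.factorial x)) *
                (d ^ y * Real.exp (-d) / (Nat.factorial y)) * n| ≤ (n : ℝ) ^ γ} := by
  obtain ⟨N₀, hN₀⟩ := Filter.eventually_atTop.1
    (eventually_measureReal_exists_degreeCount_sub_poisson_gt_le d K hγ)
  refine ⟨max N₀ ⌈d⌉₊, fun n hn ↦ ?_⟩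
  have d_le_n : d ≤ n := Nat.ceil_le.1 (le_of_max_le_right hn)
  have n_pos : (0 : ℝ) < n := hd.trans_le d_le_n
  let p : unitInterval := ⟨d / n, by positivity, div_le_one_of_le₀ d_le_n n_pos.le⟩
  have n_mul_p : n * (p : ℝ) = d := mul_div_cancel₀ d n_pos.ne'
  have poisson_mass (x : ℕ) : d ^ x * Real.exp (-d) / x.factorial =
      (ProbabilityTheory.poissonMeasure (n * unitInterval.toNNReal p)).real {x} := by
    simp [ProbabilityTheory.poissonMeasure_real_singleton, n_mul_p, mul_comm]
  have far_le := hN₀ n (le_of_max_le_left hn) p n_mul_p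
  rw [show d / n = (p : ℝ) from rfl, iidMatrixLawR_eq_map_adjacency]
  refine (ofReal_one_sub_le_measure .of_discrete ?_).trans
    (Measure.le_map_apply Measurable.of_discrete.aemeasurable _)
  simpa [Set.compl_def, ncard_adjacency_degrees, poisson_mass] using far_le
end

section
/- There exists an absolute constant C > 0 such that the following holds. Fix δ > 0 and γ ∈ (0,1), and let 1 ≤ m ≤ n/2. Let ξ ∈ {0,1}^n be chosen uniformly at random among all {0,1}-vectors with Σ_i ξ_i = m. Let v ∈ ℂ^n be such that for every θ ∈ ℂ, #{ i : |v_i − θ| ≤ δ } ≤ (1−γ)n. Then the Lévy concentration function satisfies ℒ(Σ_{i=1}^n ξ_i v_i, δ) ≤ C·( (γm)^{−1/2} + exp(−C^{−1} γ² m) ). -/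
/-!
A uniformly random `m`-subset of the indices can be drawn in two stages: first a uniformly random
injection `h` of `κ × Bool`, with `card κ = m`, into the indices, then a fair coin for each `k : κ`
to pick one of `h (k, false)` and `h (k, true)`. With `h` fixed, the sum over the chosen indices is
a constant plus a sum of the differences `v (h (k, true)) - v (h (k, false))` over a uniformly
random set of `k`, so by the Littlewood–Offord theorem of Erdős its concentration on a disc of
radius `δ` is at most a constant over the square root of the number of `k` whose difference is
longer than `δ`. That number has mean at least `γ m`, since a random pair of indices is more than
`δ` apart with probability at least `γ`. As pairs attached to different `k` are almost independent,
its variance is at most five times its mean, and Chebyshev's inequality shows that it falls below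
half of its mean with probability `O(1 / (γ m))`, which is smaller than `(γ m) ^ (-1 / 2)`.
-/

open Finset MulAction
open scoped BigOperators symmDiff

/-! ### The Littlewood–Offord problem -/

theorem centralBinom_sq_mul_le (k : ℕ) : k.centralBinom ^ 2 * (2 * k + 1) ≤ 16 ^ k := by
  induction k with
  | zero => simp
  | succ k ih =>
    refine Nat.le_of_mul_le_mul_left ?_ (show 0 < (k + 1) ^ 2 by positivity)
    calc
      (k + 1) ^ 2 * ((k + 1).centralBinom ^ 2 * (2 * (k + 1) + 1))
        = ((k + 1) * (k + 1).centralBinom) ^ 2 * (2 * k + 3) := by ring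
      _ = k.centralBinom ^ 2 * (2 * k + 1) * (4 * ((2 * k + 1) * (2 * k + 3))) := by
        rw [Nat.succ_mul_centralBinom_succ]; ring
      _ ≤ 16 ^ k * (4 * (4 * (k + 1) ^ 2)) :=
        Nat.mul_le_mul ih (Nat.mul_le_mul_left 4 (by nlinarith))
      _ = (k + 1) ^ 2 * 16 ^ (k + 1) := by ring

theorem two_mul_choose_half_of_odd (k : ℕ) :
    2 * (2 * k + 1).choose k = (k + 1).centralBinom := by
  rw [Nat.centralBinom_eq_two_mul_choose, mul_add_one, Nat.choose_succ_succ, Nat.choose_symm_half,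
    two_mul]

theorem choose_half_sq_mul_le (n : ℕ) : n.choose (n / 2) ^ 2 * n ≤ 4 ^ n := by
  obtain ⟨k, rfl | rfl⟩ := n.even_or_odd'
  · calc
      (2 * k).choose (2 * k / 2) ^ 2 * (2 * k) ≤ k.centralBinom ^ 2 * (2 * k + 1) := by
        rw [Nat.mul_div_cancel_left k two_pos, Nat.centralBinom_eq_two_mul_choose]
        gcongr
        exact Nat.le_succ _
      _ ≤ 16 ^ k := centralBinom_sq_mul_le k
      _ = 4 ^ (2 * k) := by rw [pow_mul]; norm_num
  · have h := centralBinom_sq_mul_le (k + 1)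
    rw [← two_mul_choose_half_of_odd] at h
    have sixteen_pow : 16 ^ (k + 1) = 4 * 4 ^ (2 * k + 1) := by
      rw [← pow_succ', show 2 * k + 1 + 1 = 2 * (k + 1) by ring, pow_mul]
      norm_num
    rw [show (2 * k + 1) / 2 = k by lia]
    nlinarith

theorem choose_half_mul_sqrt_le (n : ℕ) : (n.choose (n / 2) : ℝ) * √n ≤ 2 ^ n := by
  refine le_of_sq_le_sq ?_ (by positivity)
  rw [mul_pow, Real.sq_sqrt n.cast_nonneg, ← pow_mul, mul_comm n 2, pow_mul,
    show (2 : ℝ) ^ 2 = 4 by norm_num]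
  exact_mod_cast choose_half_sq_mul_le n

section

variable {ι : Type*} [Fintype ι]

theorem sum_eq_sum_abs_symmDiff_add [DecidableEq ι] (x : ι → ℝ) (S : Finset ι) :
    ∑ i ∈ S, x i = ∑ i ∈ S ∆ ({i | x i < 0} : Finset ι), |x i| + ∑ i with x i < 0, x i := by
  rw [← Fintype.sum_ite_mem S, ← Fintype.sum_ite_mem (S ∆ _), sum_filter, ← sum_add_distrib]
  refine sum_congr rfl fun i _ ↦ ?_
  by_cases hi : x i < 0
  · by_cases hS : i ∈ S <;> simp [mem_symmDiff, hi, hS, abs_of_neg]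
  · by_cases hS : i ∈ S <;> simp [mem_symmDiff, hi, hS, abs_of_nonneg (not_lt.mp hi)]

/-- Replacing `S` by `S ∆ {i | x i < 0}` turns each `x i` into `|x i|` up to a constant, after which
the sets counted form an antichain. -/
theorem card_sum_mem_Ico_le_choose {x : ι → ℝ} {r : ℝ} (hx : ∀ i, r ≤ |x i|) (c : ℝ) :
    #{S | ∑ i ∈ S, x i ∈ Set.Ico c (c + r)} ≤
      (Fintype.card ι).choose (Fintype.card ι / 2) := by
  classical
  let N : Finset ι := {i | x i < 0}
  have flip_injective : Function.Injective (· ∆ N) := symmDiff_left_injective N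
  rw [← card_map ⟨(· ∆ N), flip_injective⟩]
  refine IsAntichain.sperner ?_
  rw [coe_map]
  rintro _ ⟨S, hS, rfl⟩ _ ⟨T, hT, rfl⟩ hne hsub
  rw [mem_coe, mem_filter_univ] at hS hT
  simp only [Function.Embedding.coeFn_mk] at hne hsub
  obtain ⟨i, hiT, hiS⟩ := exists_of_ssubset (hsub.ssubset_of_ne hne)
  have gain : |x i| + ∑ j ∈ S ∆ N, |x j| ≤ ∑ j ∈ T ∆ N, |x j| := by
    rw [← sum_insert (f := fun j ↦ |x j|) hiS]
    exact sum_le_sum_of_subset_of_nonneg (insert_subset hiT hsub) fun _ _ _ ↦ abs_nonneg _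
  have hSN := sum_eq_sum_abs_symmDiff_add x S
  have hTN := sum_eq_sum_abs_symmDiff_add x T
  linarith [hS.1, hT.2, hx i]

theorem card_sum_mem_Ico_le_two_pow_mul_choose {x : ι → ℝ} {r : ℝ} {A : Finset ι}
    (hx : ∀ i ∈ A, r ≤ |x i|) (c : ℝ) :
    #{S | ∑ i ∈ S, x i ∈ Set.Ico c (c + r)} ≤
      (#A).choose (#A / 2) * 2 ^ (Fintype.card ι - #A) := by
  classical
  rw [← card_compl, ← card_powerset]
  refine card_le_mul_card_image_of_maps_to (f := (· \ A)) (fun S _ ↦ ?_) _ fun B _ ↦ ?_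
  · rw [mem_powerset, sdiff_eq_inter_compl]
    exact inter_subset_right
  rw [← Fintype.card_coe A]
  refine le_trans ?_ (card_sum_mem_Ico_le_choose (x := fun i : A ↦ x i) (fun i ↦ hx i i.2)
    (c - ∑ i ∈ B, x i))
  refine card_le_card_of_injOn (fun S ↦ S.subtype (· ∈ A)) (fun S hS ↦ ?_)
    fun S hS T hT hST ↦ ?_
  · obtain ⟨hsum, rfl⟩ : ∑ i ∈ S, x i ∈ Set.Ico c (c + r) ∧ S \ A = B := by simpa using hS
    have hsplit : ∑ i ∈ S.subtype (· ∈ A), x i + ∑ i ∈ S \ A, x i = ∑ i ∈ S, x i := by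
      rw [sum_subtype_eq_sum_filter, filter_mem_eq_inter, sum_inter_add_sum_sdiff]
    rw [mem_coe, mem_filter_univ, eq_sub_of_add_eq hsplit]
    exact ⟨by linarith [hsum.1], by linarith [hsum.2]⟩
  · have hdiff : S \ A = T \ A := (mem_filter.mp hS).2.trans (mem_filter.mp hT).2.symm
    have hinter : S ∩ A = T ∩ A := by
      simpa only [subtype_map, filter_mem_eq_inter] using
        congrArg (Finset.map (Function.Embedding.subtype _)) hST
    rw [← sdiff_union_inter S A, hdiff, hinter, sdiff_union_inter]

theorem card_sum_mem_Ico_mul_sqrt_le {x : ι → ℝ} {r : ℝ} {A : Finset ι}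
    (hx : ∀ i ∈ A, r ≤ |x i|) (c : ℝ) (k : ℕ) :
    #{S | ∑ i ∈ S, x i ∈ Set.Ico c (c + k * r)} * √(#A) ≤ k * 2 ^ Fintype.card ι := by
  classical
  induction k with
  | zero => simp
  | succ k ih =>
    have single : (#{S | ∑ i ∈ S, x i ∈ Set.Ico (c + k * r) (c + k * r + r)} : ℝ) * √(#A)
        ≤ 2 ^ Fintype.card ι := by
      calc
        _ ≤ ((#A).choose (#A / 2) * 2 ^ (Fintype.card ι - #A) : ℝ) * √(#A) := by
          gcongr
          exact_mod_cast card_sum_mem_Ico_le_two_pow_mul_choose hx (c + k * r)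
        _ = (#A).choose (#A / 2) * √(#A) * 2 ^ (Fintype.card ι - #A) := by ring
        _ ≤ 2 ^ #A * 2 ^ (Fintype.card ι - #A) := by gcongr; exact choose_half_mul_sqrt_le _
        _ = 2 ^ Fintype.card ι := by rw [← pow_add, Nat.add_sub_of_le (card_le_univ A)]
    have cover : #{S | ∑ i ∈ S, x i ∈ Set.Ico c (c + (k + 1 : ℕ) * r)} ≤
        #{S | ∑ i ∈ S, x i ∈ Set.Ico c (c + k * r)} +
        #{S | ∑ i ∈ S, x i ∈ Set.Ico (c + k * r) (c + k * r + r)} := by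
      refine (card_le_card fun S hS ↦ ?_).trans (card_union_le _ _)
      rw [← filter_or, mem_filter_univ]
      refine Set.Ico_subset_Ico_union_Ico ?_
      simpa [add_one_mul, add_assoc] using hS
    calc
      _ ≤ ((#{S | ∑ i ∈ S, x i ∈ Set.Ico c (c + k * r)} +
        #{S | ∑ i ∈ S, x i ∈ Set.Ico (c + k * r) (c + k * r + r)} : ℕ) : ℝ) * √(#A) := by
        gcongr
      _ ≤ k * 2 ^ Fintype.card ι + 2 ^ Fintype.card ι := by
        rw [Nat.cast_add, add_mul]
        exact add_le_add ih single
      _ = _ := by push_cast; ring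

theorem card_abs_sum_sub_le_mul_sqrt_le {x : ι → ℝ} {δ : ℝ} (hδ : 0 < δ) {A : Finset ι}
    (hx : ∀ i ∈ A, δ / √2 ≤ |x i|) (c : ℝ) :
    #{S | |∑ i ∈ S, x i - c| ≤ δ} * √(#A) ≤ 3 * 2 ^ Fintype.card ι := by
  refine le_trans ?_ (card_sum_mem_Ico_mul_sqrt_le hx (c - δ) 3)
  have two_mul_lt : 2 * δ < 3 * (δ / √2) := by
    rw [← mul_div_assoc, lt_div_iff₀ (by positivity)]
    nlinarith [Real.sqrt_two_lt_three_halves]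
  gcongr with S
  rw [abs_le]
  rintro ⟨h₁, h₂⟩
  exact ⟨by linarith, by push_cast; linarith⟩

theorem card_norm_sum_sub_le_mul_sqrt_le {w : ι → ℂ} {δ : ℝ} (hδ : 0 < δ) (z : ℂ) :
    #{S | ‖∑ i ∈ S, w i - z‖ ≤ δ} * √(#{i | δ ≤ ‖w i‖} / 2) ≤ 3 * 2 ^ Fintype.card ι := by
  classical
  let A : Finset ι := {i | δ / √2 ≤ |(w i).re|}
  let B : Finset ι := {i | δ / √2 ≤ |(w i).im|}
  have large_subset : ({i | δ ≤ ‖w i‖} : Finset ι) ⊆ A ∪ B := by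
    intro i hi
    simp only [A, B, ← filter_or, mem_filter_univ, ← le_max_iff] at hi ⊢
    rw [div_le_iff₀' (by positivity)]
    exact hi.trans (Complex.norm_le_sqrt_two_mul_max _)
  have hAB : (#{i | δ ≤ ‖w i‖} : ℝ) ≤ #A + #B :=
    mod_cast (card_le_card large_subset).trans (card_union_le A B)
  rcases le_total (#A : ℝ) #B with h | h
  · refine le_trans ?_ <|
      card_abs_sum_sub_le_mul_sqrt_le hδ (x := fun i ↦ (w i).im) (A := B) (by simp [B]) z.im
    gcongr with S
    · simpa using Complex.abs_im_le_norm (∑ i ∈ S, w i - z)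
    · linarith
  · refine le_trans ?_ <|
      card_abs_sum_sub_le_mul_sqrt_le hδ (x := fun i ↦ (w i).re) (A := A) (by simp [A]) z.re
    gcongr with S
    · simpa using Complex.abs_re_le_norm (∑ i ∈ S, w i - z)
    · linarith

end

/-! ### Random injections -/

section

variable {G X Y M : Type*} [Group G] [Fintype X] [MulAction G X] [MulAction G Y]
  [AddCommMonoid M] [Module ℚ≥0 M]

theorem expect_comp_mulActionHom_eq_expect_expect_smul [Fintype G] (φ : X →[G] Y) (F : Y → M) :
    𝔼 x, F (φ x) = 𝔼 x, 𝔼 g : G, F (g • φ x) := by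
  have translate (g : G) : 𝔼 x, F (g • φ x) = 𝔼 x, F (φ x) :=
    Fintype.expect_equiv (toPerm g) _ _ fun x ↦ by simp [map_smul]
  rw [expect_comm]
  simp only [translate, Fintype.expect_const]

theorem expect_comp_mulActionHom [Finite G] [Fintype Y] [Nonempty X] [IsPretransitive G Y]
    (φ : X →[G] Y) (F : Y → M) : 𝔼 x, F (φ x) = 𝔼 y, F y := by
  have := Fintype.ofFinite G
  obtain ⟨y₀⟩ : Nonempty Y := .map φ inferInstance
  have : Nonempty Y := ⟨y₀⟩
  have orbit_average (y : Y) : 𝔼 g : G, F (g • y) = 𝔼 g : G, F (g • y₀) := by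
    obtain ⟨h, rfl⟩ := exists_smul_eq G y₀ y
    exact Fintype.expect_equiv (Equiv.mulRight h) _ _ fun g ↦ by simp [mul_smul]
  have average_id := expect_comp_mulActionHom_eq_expect_expect_smul (.id G) F
  simp only [MulActionHom.id_apply] at average_id
  simp only [expect_comp_mulActionHom_eq_expect_expect_smul φ, average_id, orbit_average,
    Fintype.expect_const]

end

theorem isPretransitive_perm_embedding {κ ι : Type*} [Finite κ] :
    IsPretransitive (Equiv.Perm ι) (κ ↪ ι) where
  exists_smul_eq f f' := by
    obtain ⟨n, ⟨e⟩⟩ := Finite.exists_equiv_fin κ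
    have := Equiv.Perm.isMultiplyPretransitive ι n
    obtain ⟨g, hg⟩ := exists_smul_eq (Equiv.Perm ι)
      (e.symm.toEmbedding.trans f) (e.symm.toEmbedding.trans f')
    exact ⟨g, by ext k; simpa using DFunLike.congr_fun hg (e k)⟩

section

variable {ι κ β γ M : Type*} [AddCommMonoid M] [Module ℚ≥0 M]

theorem expect_embedding_trans [Finite ι] [Finite β] [Fintype (κ ↪ ι)] [Fintype (β ↪ ι)]
    [Nonempty (κ ↪ ι)] (f : β ↪ κ) (F : (β ↪ ι) → M) :
    𝔼 h : κ ↪ ι, F (f.trans h) = 𝔼 y, F y :=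
  have := isPretransitive_perm_embedding (κ := β) (ι := ι)
  expect_comp_mulActionHom (G := Equiv.Perm ι) ⟨fun h : κ ↪ ι ↦ f.trans h, fun _ _ ↦ rfl⟩ F

theorem expect_map_univ [Fintype ι] [Fintype κ] [Fintype (κ ↪ ι)] [Nonempty (κ ↪ ι)]
    (F : Finset ι → M) :
    𝔼 h : κ ↪ ι, F (univ.map h) = 𝔼 T ∈ powersetCard (Fintype.card κ) univ, F T := by
  classical
  let φ : (κ ↪ ι) →[Equiv.Perm ι] Set.powersetCard ι (Fintype.card κ) :=
    ⟨fun h ↦ ⟨univ.map h, card_map h⟩, fun g h ↦ Subtype.ext <| by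
      ext; simp [mem_smul_finset]⟩
  have := Set.powersetCard.isPretransitive (α := ι) (n := Fintype.card κ)
  refine (expect_comp_mulActionHom φ fun T ↦ F T).trans ?_
  exact expect_bij (fun T _ ↦ T) (fun T _ ↦ by simp) (fun _ _ ↦ rfl)
    (fun _ _ _ _ ↦ Subtype.ext) (fun T hT ↦ ⟨⟨T, by simpa using hT⟩, by simp⟩)

theorem sum_inl_trans_mul_inr_trans_le [Fintype (β ↪ ι)] [Fintype (γ ↪ ι)] [Fintype (β ⊕ γ ↪ ι)]
    {F : (β ↪ ι) → ℝ} {H : (γ ↪ ι) → ℝ} (hF : ∀ f, 0 ≤ F f) (hH : ∀ f, 0 ≤ H f) :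
    ∑ h : β ⊕ γ ↪ ι, F (.trans .inl h) * H (.trans .inr h) ≤ (∑ f, F f) * ∑ f, H f := by
  let restrict (h : β ⊕ γ ↪ ι) : (β ↪ ι) × (γ ↪ ι) := (.trans .inl h, .trans .inr h)
  have restrict_injective : restrict.Injective := fun h h' e ↦ by
    ext (b | c)
    · exact DFunLike.congr_fun (congrArg Prod.fst e) b
    · exact DFunLike.congr_fun (congrArg Prod.snd e) c
  rw [Fintype.sum_mul_sum, ← Fintype.sum_prod_type']
  exact (sum_map univ ⟨restrict, restrict_injective⟩ fun x ↦ F x.1 * H x.2).symm.trans_le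
    (sum_le_univ_sum_of_nonneg fun x ↦ mul_nonneg (hF _) (hH _))

theorem expect_inl_trans_mul_inr_trans_le [Fintype (β ↪ ι)] [Fintype (γ ↪ ι)] [Fintype (β ⊕ γ ↪ ι)]
    {F : (β ↪ ι) → ℝ} {H : (γ ↪ ι) → ℝ} (hF : ∀ f, 0 ≤ F f) (hH : ∀ f, 0 ≤ H f) :
    𝔼 h : β ⊕ γ ↪ ι, F (.trans .inl h) * H (.trans .inr h) ≤
      Fintype.card (β ↪ ι) * Fintype.card (γ ↪ ι) / Fintype.card (β ⊕ γ ↪ ι) *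
        ((𝔼 f, F f) * 𝔼 f, H f) := by
  rw [Fintype.expect_eq_sum_div_card, div_mul_eq_mul_div, mul_mul_mul_comm,
    Fintype.card_mul_expect, Fintype.card_mul_expect]
  gcongr
  exact sum_inl_trans_mul_inr_trans_le hF hH

end

/-! ### The second moment method -/

section

variable {Ω κ : Type*} [Fintype Ω] [Fintype κ]

theorem expect_sum_sub_sq_le [Nonempty Ω] {Y : κ → Ω → ℝ} {p q : ℝ}
    (hY : ∀ k ω, Y k ω ∈ Set.Icc 0 1) (mean : ∀ k, 𝔼 ω, Y k ω = p)
    (corr : Pairwise fun k l ↦ 𝔼 ω, Y k ω * Y l ω ≤ q) :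
    𝔼 ω, (∑ k, Y k ω - Fintype.card κ * p) ^ 2 ≤
      Fintype.card κ * (p + (Fintype.card κ - 1) * q - Fintype.card κ * p ^ 2) := by
  classical
  set m : ℝ := (Fintype.card κ : ℝ) with hm
  have mean_sum : 𝔼 ω, ∑ k, Y k ω = m * p := by
    simp [expect_sum_comm, mean, hm]
  have row_le (k : κ) : ∑ l, 𝔼 ω, Y k ω * Y l ω ≤ p + (m - 1) * q := by
    rw [← add_sum_erase univ _ (mem_univ k)]
    gcongr
    · exact (expect_le_expect fun ω _ ↦ mul_le_of_le_one_right (hY k ω).1 (hY k ω).2).trans_eq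
        (mean k)
    · refine (sum_le_card_nsmul _ _ q fun l hl ↦ corr (ne_of_mem_erase hl).symm).trans_eq ?_
      rw [card_erase_of_mem (mem_univ k), card_univ, nsmul_eq_mul,
        Nat.cast_pred (Fintype.card_pos_iff.mpr ⟨k⟩)]
  have second_moment_le : 𝔼 ω, (∑ k, Y k ω) ^ 2 ≤ m * (p + (m - 1) * q) := by
    simp only [sq, sum_mul_sum, expect_sum_comm]
    refine (sum_le_card_nsmul univ _ _ fun k _ ↦ row_le k).trans_eq ?_
    rw [card_univ, nsmul_eq_mul]
  calc
    𝔼 ω, (∑ k, Y k ω - m * p) ^ 2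
      = 𝔼 ω, (∑ k, Y k ω) ^ 2 - 2 * (m * p) * 𝔼 ω, ∑ k, Y k ω + (m * p) ^ 2 := by
        rw [mul_expect, ← expect_sub_distrib, ← Fintype.expect_const (ι := Ω) ((m * p) ^ 2),
          ← expect_add_distrib]
        exact expect_congr rfl fun ω _ ↦ by ring
    _ ≤ _ := by rw [mean_sum]; linarith

theorem expect_ite_lt_sub_mul_sq_le (X : Ω → ℝ) (μ : ℝ) {t : ℝ} (ht : 0 ≤ t) :
    (𝔼 ω, if X ω < μ - t then 1 else 0) * t ^ 2 ≤ 𝔼 ω, (X ω - μ) ^ 2 := by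
  rw [expect_mul]
  refine expect_le_expect fun ω _ ↦ ?_
  split_ifs with h
  · nlinarith
  · simpa using sq_nonneg _

end

/-- The quotient measures how far two disjoint random pairs of indices are from independent; it is
`1 + O(1 / card ι)`. -/
theorem card_sub_one_mul_card_embedding_div_le {ι κ : Type*} [Fintype ι] [Fintype κ]
    [Fintype (Bool ↪ ι)] [Fintype (Bool ⊕ Bool ↪ ι)]
    (hm : 2 * Fintype.card κ ≤ Fintype.card ι) (hn : 4 ≤ Fintype.card ι) :
    (Fintype.card κ - 1 : ℝ) *
      (Fintype.card (Bool ↪ ι) * Fintype.card (Bool ↪ ι) / Fintype.card (Bool ⊕ Bool ↪ ι)) ≤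
      Fintype.card κ + 4 := by
  obtain ⟨d, hd⟩ := Nat.exists_eq_add_of_le hn
  have hm' : 2 * (Fintype.card κ : ℝ) ≤ d + 4 := by exact_mod_cast hm.trans_eq (by lia)
  have card_pair : (Fintype.card (Bool ↪ ι) : ℝ) = (d + 4) * (d + 3) := by
    rw [Fintype.card_embedding_eq, Fintype.card_bool, hd]
    simp only [Nat.descFactorial_succ, Nat.descFactorial_zero, tsub_zero,
      show 4 + d - 1 = d + 3 by lia]
    push_cast
    ring
  have card_quad : (Fintype.card (Bool ⊕ Bool ↪ ι) : ℝ) =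
      (d + 4) * (d + 3) * ((d + 2) * (d + 1)) := by
    rw [Fintype.card_embedding_eq, Fintype.card_sum, Fintype.card_bool, hd]
    simp only [Nat.descFactorial_succ, Nat.descFactorial_zero, tsub_zero,
      show 4 + d - 1 = d + 3 by lia, show 4 + d - 2 = d + 2 by lia,
      show 4 + d - 3 = d + 1 by lia]
    push_cast
    ring
  rw [card_pair, card_quad, mul_div_mul_left _ _ (by positivity), mul_div_assoc',
    div_le_iff₀ (by positivity)]
  nlinarith

theorem expect_sectR_mul_sectR_le {ι κ : Type*} [Finite ι] [Fintype (Bool ↪ ι)]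
    [Fintype (κ × Bool ↪ ι)] [Nonempty (κ × Bool ↪ ι)] [Fintype (Bool ⊕ Bool ↪ ι)]
    {F : (Bool ↪ ι) → ℝ} (hF : ∀ f, 0 ≤ F f) {k l : κ} (hkl : k ≠ l) :
    𝔼 h : κ × Bool ↪ ι, F (.trans (.sectR k Bool) h) * F (.trans (.sectR l Bool) h) ≤
      Fintype.card (Bool ↪ ι) * Fintype.card (Bool ↪ ι) / Fintype.card (Bool ⊕ Bool ↪ ι) *
        (𝔼 f, F f) ^ 2 := by
  let e : Bool ⊕ Bool ↪ κ × Bool :=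
    ⟨Sum.elim (.mk k) (.mk l), (Prod.mk_right_injective k).sumElim (Prod.mk_right_injective l)
      fun _ _ h ↦ hkl (congrArg Prod.fst h)⟩
  rw [sq]
  exact (expect_embedding_trans e fun f ↦ F (.trans .inl f) * F (.trans .inr f)).trans_le
    (expect_inl_trans_mul_inr_trans_le hF hF)

section

variable {ι κ : Type*} [Fintype ι] [Fintype κ] [Fintype (Bool ↪ ι)] [Fintype (κ × Bool ↪ ι)]
  [Nonempty (κ × Bool ↪ ι)] {F : (Bool ↪ ι) → ℝ}

theorem expect_sum_sectR_sub_sq_le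
    (hm : 2 * Fintype.card κ ≤ Fintype.card ι) (hn : 4 ≤ Fintype.card ι)
    (hF : ∀ f, F f ∈ Set.Icc 0 1) :
    𝔼 h : κ × Bool ↪ ι, (∑ k, F (.trans (.sectR k Bool) h) - Fintype.card κ * 𝔼 f, F f) ^ 2 ≤
      5 * (Fintype.card κ * 𝔼 f, F f) := by
  classical
  set m : ℝ := (Fintype.card κ : ℝ)
  set p := 𝔼 f, F f
  have hp : p ∈ Set.Icc 0 1 := by
    have : Nonempty (Bool ↪ ι) :=
      Function.Embedding.nonempty_of_card_le (by rw [Fintype.card_bool]; lia)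
    exact ⟨expect_nonneg fun f _ ↦ (hF f).1, expect_le univ_nonempty fun f _ ↦ (hF f).2⟩
  have mean (k : κ) : 𝔼 h : κ × Bool ↪ ι, F (.trans (.sectR k Bool) h) = p :=
    expect_embedding_trans _ F
  refine (expect_sum_sub_sq_le (fun k h ↦ hF _) mean fun k l ↦
    expect_sectR_mul_sectR_le fun f ↦ (hF f).1).trans ?_
  have ratio_le := card_sub_one_mul_card_embedding_div_le hm hn
  rw [← mul_assoc, mul_left_comm 5]
  refine mul_le_mul_of_nonneg_left ?_ (Nat.cast_nonneg _)
  nlinarith [mul_le_mul_of_nonneg_right ratio_le (sq_nonneg p), hp.1, hp.2]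

theorem expect_ite_sum_sectR_lt_mul_le
    (hm : 2 * Fintype.card κ ≤ Fintype.card ι) (hn : 4 ≤ Fintype.card ι)
    (hF : ∀ f, F f ∈ Set.Icc 0 1) :
    (𝔼 h : κ × Bool ↪ ι, if ∑ k, F (.trans (.sectR k Bool) h) < Fintype.card κ * (𝔼 f, F f) / 2
      then 1 else 0) * (Fintype.card κ * 𝔼 f, F f) ≤ 20 := by
  set μ : ℝ := (Fintype.card κ : ℝ) * 𝔼 f, F f
  have hμ : 0 ≤ μ := mul_nonneg (Nat.cast_nonneg _) (expect_nonneg fun f _ ↦ (hF f).1)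
  have chebyshev := (expect_ite_lt_sub_mul_sq_le _ μ (div_nonneg hμ zero_le_two)).trans
    (expect_sum_sectR_sub_sq_le (κ := κ) hm hn hF)
  rw [sub_half] at chebyshev
  rcases hμ.eq_or_lt with hμ | hμ
  · simp [← hμ]
  · refine le_of_mul_le_mul_right ?_ hμ
    linarith

end

/-! ### Random choices from random pairs -/

section

variable {ι κ : Type*}

/-- The transversal of the pairs `{(k, false), (k, true)}` that picks `(k, true)` exactly for
`k ∈ S`. A uniformly random `S` encodes independent fair choices from the pairs. -/
@[simps]
def pairChoice [DecidableEq κ] (S : Finset κ) : κ ↪ κ × Bool where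
  toFun k := (k, decide (k ∈ S))
  inj' _ _ h := congrArg Prod.fst h

theorem expect_powersetCard_eq_expect_pairChoice [Fintype ι] [Fintype κ] [DecidableEq κ]
    [Fintype (κ × Bool ↪ ι)] [Nonempty (κ × Bool ↪ ι)] {M : Type*} [AddCommMonoid M]
    [Module ℚ≥0 M] (F : Finset ι → M) :
    𝔼 T ∈ powersetCard (Fintype.card κ) univ, F T =
      𝔼 h : κ × Bool ↪ ι, 𝔼 S : Finset κ, F (univ.map ((pairChoice S).trans h)) := by
  classical
  have : Nonempty (κ ↪ ι) := .map (.trans (pairChoice ∅)) ‹_›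
  rw [expect_comm, ← expect_map_univ, eq_comm]
  simp only [expect_embedding_trans (pairChoice _) fun f : κ ↪ ι ↦ F (univ.map f),
    Fintype.expect_const]

theorem sum_map_pairChoice {M : Type*} [AddCommGroup M] [Fintype κ] [DecidableEq κ]
    (S : Finset κ) (h : κ × Bool ↪ ι) (v : ι → M) :
    ∑ i ∈ univ.map ((pairChoice S).trans h), v i =
      ∑ k, v (h (k, false)) + ∑ k ∈ S, (v (h (k, true)) - v (h (k, false))) := by
  rw [sum_map, ← Fintype.sum_ite_mem S, ← sum_add_distrib]
  refine sum_congr rfl fun k _ ↦ ?_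
  by_cases hk : k ∈ S <;> simp [hk]

variable [Fintype κ]

/-- The pairs `{h (k, false), h (k, true)}` on which the values of `v` are more than `δ` apart. -/
noncomputable def farPairs (v : ι → ℂ) (δ : ℝ) (h : κ × Bool ↪ ι) : Finset κ :=
  {k | δ < ‖v (h (k, true)) - v (h (k, false))‖}

theorem expect_ite_norm_sum_pairChoice_mul_sqrt_le [DecidableEq κ] (v : ι → ℂ) {δ : ℝ}
    (hδ : 0 < δ) (z : ℂ) (h : κ × Bool ↪ ι) :
    (𝔼 S : Finset κ,
      if ‖∑ i ∈ univ.map ((pairChoice S).trans h), v i - z‖ ≤ δ then (1 : ℝ) else 0) *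
        √(#(farPairs v δ h) / 2) ≤ 3 := by
  have littlewood_offord := card_norm_sum_sub_le_mul_sqrt_le
    (w := fun k ↦ v (h (k, true)) - v (h (k, false))) hδ (z - ∑ k, v (h (k, false)))
  rw [Fintype.expect_eq_sum_div_card, sum_boole, Fintype.card_finset, div_mul_eq_mul_div,
    div_le_iff₀ (by positivity)]
  refine le_trans ?_ (littlewood_offord.trans_eq (by norm_cast))
  gcongr with S
  · rw [sum_map_pairChoice, add_comm, sub_sub_eq_add_sub]
  · exact monotone_filter_right _ fun _ _ hk ↦ hk.le

end

section

variable {ι : Type*} [Fintype ι]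

open Classical in
/-- The probability that the values of `v` at a uniformly random ordered pair of distinct indices
are more than `δ` apart. -/
noncomputable def farPairDensity (v : ι → ℂ) (δ : ℝ) : ℝ :=
  𝔼 f : Bool ↪ ι, if δ < ‖v (f true) - v (f false)‖ then 1 else 0

theorem farPairDensity_nonneg (v : ι → ℂ) (δ : ℝ) : 0 ≤ farPairDensity v δ :=
  expect_nonneg fun _ _ ↦ by split_ifs <;> norm_num

theorem farPairDensity_le_one (v : ι → ℂ) (δ : ℝ) : farPairDensity v δ ≤ 1 := by
  rcases isEmpty_or_nonempty (Bool ↪ ι)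
  · simp [farPairDensity]
  · exact expect_le univ_nonempty fun _ _ ↦ by split_ifs <;> norm_num

theorem card_far_pairs_le (v : ι → ℂ) {δ : ℝ} (hδ : 0 ≤ δ) :
    #{x : ι × ι | δ < ‖v x.1 - v x.2‖} ≤ Fintype.card ι ^ 2 * farPairDensity v δ := by
  classical
  have far_pairs_le :
      #{x : ι × ι | δ < ‖v x.1 - v x.2‖} ≤ #{f : Bool ↪ ι | δ < ‖v (f true) - v (f false)‖} := by
    refine card_le_card_of_surjOn (fun f ↦ (f true, f false)) fun ⟨i, j⟩ hij ↦ ?_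
    have far : δ < ‖v i - v j‖ := by simpa using hij
    have ne : j ≠ i := by
      rintro rfl
      simp [hδ.not_gt] at far
    have ne' : (fun b ↦ cond b i j).Injective := Bool.injective_iff.mpr ne
    exact ⟨⟨_, ne'⟩, by simpa using far, rfl⟩
  calc
    (#{x : ι × ι | δ < ‖v x.1 - v x.2‖} : ℝ)
      ≤ #{f : Bool ↪ ι | δ < ‖v (f true) - v (f false)‖} := mod_cast far_pairs_le
    _ = Fintype.card (Bool ↪ ι) * farPairDensity v δ := by
      rw [farPairDensity, Fintype.card_mul_expect, sum_boole]
    _ ≤ Fintype.card ι ^ 2 * farPairDensity v δ := by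
      gcongr
      · exact farPairDensity_nonneg v δ
      · rw [Fintype.card_embedding_eq, Fintype.card_bool]
        exact_mod_cast Nat.descFactorial_le_pow _ _

theorem le_farPairDensity [Nonempty ι] {v : ι → ℂ} {δ γ : ℝ} (hδ : 0 ≤ δ)
    (hv : #{x : ι × ι | ‖v x.1 - v x.2‖ ≤ δ} ≤ (1 - γ) * Fintype.card ι ^ 2) :
    γ ≤ farPairDensity v δ := by
  have close_add_far := card_filter_add_card_filter_not (s := univ)
    fun x : ι × ι ↦ ‖v x.1 - v x.2‖ ≤ δ
  simp only [not_le, card_univ, Fintype.card_prod, ← sq] at close_add_far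
  have close_add_far' : (#{x : ι × ι | ‖v x.1 - v x.2‖ ≤ δ} : ℝ) +
    #{x : ι × ι | δ < ‖v x.1 - v x.2‖} = Fintype.card ι ^ 2 := mod_cast close_add_far
  refine le_of_mul_le_mul_left ?_ (show 0 < (Fintype.card ι : ℝ) ^ 2 by positivity)
  linarith [card_far_pairs_le v hδ]

theorem card_close_pairs_le {v : ι → ℂ} {δ a : ℝ}
    (hv : ∀ j, #{i | ‖v i - v j‖ ≤ δ} ≤ a * Fintype.card ι) :
    #{x : ι × ι | ‖v x.1 - v x.2‖ ≤ δ} ≤ a * Fintype.card ι ^ 2 := by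
  calc
    (#{x : ι × ι | ‖v x.1 - v x.2‖ ≤ δ} : ℝ) = ∑ j, (#{i | ‖v i - v j‖ ≤ δ} : ℝ) := by
      simp only [← sum_boole, Fintype.sum_prod_type_right]
    _ ≤ Fintype.card ι • (a * Fintype.card ι) := sum_le_card_nsmul univ _ _ fun j _ ↦ hv j
    _ = a * Fintype.card ι ^ 2 := by rw [nsmul_eq_mul]; ring

end

section

variable {ι κ : Type*} [Fintype ι] [Fintype κ] [Fintype (κ × Bool ↪ ι)]
  [Nonempty (κ × Bool ↪ ι)] (v : ι → ℂ) {δ : ℝ}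

theorem expect_ite_card_farPairs_lt_mul_le (δ : ℝ) (hm : 2 * Fintype.card κ ≤ Fintype.card ι)
    (hn : 4 ≤ Fintype.card ι) :
    (𝔼 h : κ × Bool ↪ ι,
        if (#(farPairs v δ h) : ℝ) < Fintype.card κ * farPairDensity v δ / 2 then 1 else 0) *
      (Fintype.card κ * farPairDensity v δ) ≤ 20 := by
  classical
  have card_farPairs (h : κ × Bool ↪ ι) : (#(farPairs v δ h) : ℝ) =
      ∑ k, if δ < ‖v (h (k, true)) - v (h (k, false))‖ then 1 else 0 := (sum_boole ..).symm
  simp only [card_farPairs]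
  exact expect_ite_sum_sectR_lt_mul_le
    (F := fun f ↦ if δ < ‖v (f true) - v (f false)‖ then 1 else 0) hm hn
    fun _ ↦ by split_ifs <;> norm_num

theorem expect_ite_norm_sum_sub_mul_sqrt_le_add (hδ : 0 < δ) (z : ℂ) (μ : ℝ) :
    (𝔼 T ∈ powersetCard (Fintype.card κ) univ,
        if ‖∑ i ∈ T, v i - z‖ ≤ δ then (1 : ℝ) else 0) * √μ ≤
      6 + (𝔼 h : κ × Bool ↪ ι, if (#(farPairs v δ h) : ℝ) < μ / 2 then 1 else 0) * √μ := by
  classical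
  rw [expect_powersetCard_eq_expect_pairChoice (κ := κ), expect_mul, expect_mul,
    ← Fintype.expect_const (ι := κ × Bool ↪ ι) (6 : ℝ), ← expect_add_distrib]
  refine expect_le_expect fun h _ ↦ ?_
  split_ifs with few
  · rw [one_mul]
    refine (mul_le_of_le_one_left (Real.sqrt_nonneg μ) ?_).trans (by linarith)
    exact expect_le univ_nonempty fun _ _ ↦ by split_ifs <;> norm_num
  · have sqrt_le : √μ ≤ 2 * √(#(farPairs v δ h) / 2) := by
      rw [Real.sqrt_le_left (by positivity), mul_pow, Real.sq_sqrt (by positivity)]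
      linarith
    rw [zero_mul, add_zero]
    refine (mul_le_mul_of_nonneg_left sqrt_le ?_).trans ?_
    · exact expect_nonneg fun _ _ ↦ by split_ifs <;> norm_num
    · linarith [expect_ite_norm_sum_pairChoice_mul_sqrt_le v hδ z h]

end

section

variable {ι : Type*} [Fintype ι] {m : ℕ} {δ : ℝ}

theorem expect_ite_norm_sum_sub_mul_sqrt_le (hm : 2 * m ≤ Fintype.card ι) (v : ι → ℂ)
    (hδ : 0 < δ) (z : ℂ) :
    (𝔼 T ∈ powersetCard m univ, if ‖∑ i ∈ T, v i - z‖ ≤ δ then (1 : ℝ) else 0) *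
      √(m * farPairDensity v δ) ≤ 9 := by
  classical
  set μ := m * farPairDensity v δ
  rcases le_or_gt √μ 9 with hsmall | hlarge
  · refine (mul_le_of_le_one_left (Real.sqrt_nonneg _) ?_).trans hsmall
    refine expect_le (powersetCard_nonempty_of_le ?_) fun _ _ ↦ by split_ifs <;> norm_num
    rw [card_univ]
    lia
  have hμ : 9 ^ 2 < μ := (Real.lt_sqrt (by norm_num)).mp hlarge
  have hm' : (9 ^ 2 : ℝ) < m :=
    hμ.trans_le <| mul_le_of_le_one_right m.cast_nonneg (farPairDensity_le_one v δ)
  have hn : 4 ≤ Fintype.card ι := by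
    have : 9 ^ 2 < m := mod_cast hm'
    lia
  have : Nonempty (Fin m × Bool ↪ ι) :=
    Function.Embedding.nonempty_of_card_le (by simpa [mul_comm] using hm)
  have split_bound := expect_ite_norm_sum_sub_mul_sqrt_le_add (κ := Fin m) v hδ z μ
  have few_far_pairs := expect_ite_card_farPairs_lt_mul_le (κ := Fin m) v δ (by simpa using hm) hn
  rw [Fintype.card_fin] at split_bound few_far_pairs
  have few_far_pairs_sqrt :
      (𝔼 h : Fin m × Bool ↪ ι, if (#(farPairs v δ h) : ℝ) < μ / 2 then 1 else 0) * √μ ≤ 3 := by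
    refine le_of_mul_le_mul_right ?_ (show 0 < √μ by linarith)
    rw [mul_assoc, Real.mul_self_sqrt (by linarith)]
    linarith
  linarith

end

theorem slice_anticoncentration_general {ι : Type*} [Fintype ι] {δ γ : ℝ} {m : ℕ} (hδ : 0 < δ)
    (hγ : 0 < γ) (hm : 1 ≤ m) (hmn : 2 * m ≤ Fintype.card ι) {v : ι → ℂ}
    (hv : #{x : ι × ι | ‖v x.1 - v x.2‖ ≤ δ} ≤ (1 - γ) * Fintype.card ι ^ 2) (z : ℂ) :
    (#{T ∈ powersetCard m univ | ‖∑ i ∈ T, v i - z‖ ≤ δ} : ℝ) / #(powersetCard m (univ : Finset ι))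
      ≤ 9 * (γ * m) ^ (-(1 / 2 : ℝ)) := by
  have : Nonempty ι := Fintype.card_pos_iff.mp (by lia)
  have hγm : 0 < γ * m := by positivity
  rw [← sum_boole, ← expect_eq_sum_div_card, Real.rpow_neg hγm.le, ← Real.sqrt_eq_rpow,
    ← div_eq_mul_inv, le_div_iff₀ (Real.sqrt_pos.mpr hγm)]
  refine le_trans ?_ (expect_ite_norm_sum_sub_mul_sqrt_le hmn v hδ z)
  rw [mul_comm γ]
  gcongr
  exact le_farPairDensity hδ.le hv

theorem slice_anticoncentration :
    ∃ C : ℝ, 0 < C ∧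
      ∀ (δ γ : ℝ) (n m : ℕ), 0 < δ → γ ∈ Set.Ioo (0 : ℝ) 1 →
        1 ≤ m → 2 * m ≤ n →
        ∀ v : Fin n → ℂ,
          (∀ θ : ℂ, (({i : Fin n | ‖v i - θ‖ ≤ δ}).ncard : ℝ) ≤ (1 - γ) * n) →
          ∀ z : ℂ,
            ((((Finset.univ : Finset (Fin n)).powersetCard m).filter
                (fun T => ‖(∑ i ∈ T, v i) - z‖ ≤ δ)).card : ℝ) /
              (((Finset.univ : Finset (Fin n)).powersetCard m).card : ℝ) ≤
            C * ((γ * m) ^ (-(1 / 2 : ℝ)) + Real.exp (-(γ ^ 2 * m) / C)) := by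
  refine ⟨9, by norm_num, fun δ γ n m hδ hγ hm hmn v hv z ↦ ?_⟩
  have few_close_pairs := card_close_pairs_le (v := v) (δ := δ) (a := 1 - γ) fun j ↦ by
    simpa [Set.ncard_eq_toFinset_card'] using hv (v j)
  refine (slice_anticoncentration_general hδ hγ.1 hm (by simpa using hmn) few_close_pairs
    z).trans ?_
  gcongr
  exact le_add_of_nonneg_right (Real.exp_pos _).le
end
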